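/- arXiv:1211.4514 — 14 statements merged into one kernel-verified Lean document; each statement's English description precedes it below -/
import Mathlib

section
/- The convex hull in ℝ³ of the union of the two orthogonal unit disks D₁ = {(x,y,0) : x² + y² ≤ 1} and D₂ = {(x,0,z) : x² + z² ≤ 1} equals the set {(x,y,z) : x² ≤ 1 and |y| + |z| ≤ √(1 − x²)}. -/
open Real

lemma aux_iff (x s : ℝ) (hs : 0 ≤ s) :
    (x ^ 2 ≤ 1 ∧ s ≤ Real.sqrt (1 - x ^ 2)) ↔ x ^ 2 + s ^ 2 ≤ 1 := by
  constructor
  · rintro ⟨h1, h2⟩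
    rw [Real.le_sqrt hs (by linarith)] at h2
    linarith
  · intro h
    have h1 : x ^ 2 ≤ 1 := by nlinarith [sq_nonneg s]
    exact ⟨h1, (Real.le_sqrt hs (by linarith)).2 (by linarith)⟩

lemma aux_sign (y : ℝ) : ∃ e : ℝ, e ^ 2 = 1 ∧ |y| * e = y := by
  rcases abs_cases y with ⟨h, _⟩ | ⟨h, _⟩
  · exact ⟨1, by norm_num, by rw [h]; ring⟩
  · exact ⟨-1, by norm_num, by rw [h]; ring⟩

/-- The convex hull in ℝ³ of the union of the two orthogonal unit disks
D₁ = {(x,y,0) : x² + y² ≤ 1} and D₂ = {(x,0,z) : x² + z² ≤ 1} equals the set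
{(x,y,z) : x² ≤ 1 and |y| + |z| ≤ √(1 − x²)}. -/
theorem convexHull_two_orthogonal_disks_common_center :
    convexHull ℝ
      ({p : EuclideanSpace ℝ (Fin 3) | (p 0) ^ 2 + (p 1) ^ 2 ≤ 1 ∧ p 2 = 0} ∪
       {p : EuclideanSpace ℝ (Fin 3) | (p 0) ^ 2 + (p 2) ^ 2 ≤ 1 ∧ p 1 = 0}) =
    {p : EuclideanSpace ℝ (Fin 3) |
      (p 0) ^ 2 ≤ 1 ∧ |p 1| + |p 2| ≤ Real.sqrt (1 - (p 0) ^ 2)} := by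
  have hset : {p : EuclideanSpace ℝ (Fin 3) |
      (p 0) ^ 2 ≤ 1 ∧ |p 1| + |p 2| ≤ Real.sqrt (1 - (p 0) ^ 2)} =
      {p : EuclideanSpace ℝ (Fin 3) | (p 0) ^ 2 + (|p 1| + |p 2|) ^ 2 ≤ 1} := by
    ext p
    exact aux_iff _ _ (by positivity)
  rw [hset]
  apply Set.Subset.antisymm
  · apply convexHull_min
    · rintro p (⟨h, h0⟩ | ⟨h, h0⟩)
      · simpa [h0] using h
      · simpa [h0] using h
    · intro p hp q hq a b ha hb hab
      simp only [Set.mem_setOf_eq, PiLp.add_apply, PiLp.smul_apply, smul_eq_mul] at *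
      have hs : |a * p 1 + b * q 1| + |a * p 2 + b * q 2| ≤
          a * (|p 1| + |p 2|) + b * (|q 1| + |q 2|) := by
        have h1 := abs_add_le (a * p 1) (b * q 1)
        have h2 := abs_add_le (a * p 2) (b * q 2)
        rw [abs_mul, abs_mul, abs_of_nonneg ha, abs_of_nonneg hb] at h1 h2
        linarith
      have hs2 := pow_le_pow_left₀ (by positivity) hs 2
      generalize |p 1| + |p 2| = s at *
      generalize |q 1| + |q 2| = t at *
      obtain rfl : b = 1 - a := by linarith
      have h3 := mul_nonneg ha hb
      have e : (a * p 0 + (1 - a) * q 0) ^ 2 + (a * s + (1 - a) * t) ^ 2 =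
        a * (p 0 ^ 2 + s ^ 2) + (1 - a) * (q 0 ^ 2 + t ^ 2)
          - a * (1 - a) * ((p 0 - q 0) ^ 2 + (s - t) ^ 2) := by ring
      have h4 : 0 ≤ a * (1 - a) * ((p 0 - q 0) ^ 2 + (s - t) ^ 2) := by positivity
      have h5 := mul_le_mul_of_nonneg_left hp ha
      have h6 := mul_le_mul_of_nonneg_left hq hb
      linarith
  · intro p hp
    simp only [Set.mem_setOf_eq] at hp
    obtain ⟨e, he, hy⟩ := aux_sign (p 1)
    obtain ⟨f, hf, hz⟩ := aux_sign (p 2)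
    have hy0 := abs_nonneg (p 1)
    have hz0 := abs_nonneg (p 2)
    by_cases h0 : |p 1| + |p 2| = 0
    · apply subset_convexHull
      left
      have h1 : p 1 = 0 := abs_eq_zero.1 (by linarith)
      have h2 : p 2 = 0 := abs_eq_zero.1 (by linarith)
      simpa [h1, h2] using hp
    · set s := |p 1| + |p 2| with hs
      have hA : (!₂[p 0, s * e, 0] : EuclideanSpace ℝ (Fin 3)) ∈
        ({p : EuclideanSpace ℝ (Fin 3) | (p 0) ^ 2 + (p 1) ^ 2 ≤ 1 ∧ p 2 = 0} ∪
       {p : EuclideanSpace ℝ (Fin 3) | (p 0) ^ 2 + (p 2) ^ 2 ≤ 1 ∧ p 1 = 0}) := by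
        left
        simp [mul_pow, he, hp]
      have hB : (!₂[p 0, 0, s * f] : EuclideanSpace ℝ (Fin 3)) ∈
        ({p : EuclideanSpace ℝ (Fin 3) | (p 0) ^ 2 + (p 1) ^ 2 ≤ 1 ∧ p 2 = 0} ∪
       {p : EuclideanSpace ℝ (Fin 3) | (p 0) ^ 2 + (p 2) ^ 2 ≤ 1 ∧ p 1 = 0}) := by
        right
        simp [mul_pow, hf, hp]
      have hab : |p 1| / s + |p 2| / s = 1 := by
        rw [← add_div, ← hs, div_self h0]
      have key := (convex_convexHull ℝ _) (subset_convexHull ℝ _ hA) (subset_convexHull ℝ _ hB)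
        (a := |p 1| / s) (b := |p 2| / s) (by positivity) (by positivity) hab
      convert key using 1
      ext i
      fin_cases i
      · simp [← add_mul, hab]
      · have : |p 1| / s * (s * e) = p 1 := by
          rw [← mul_assoc, div_mul_cancel₀ _ h0, hy]
        simp [this]
      · have : |p 2| / s * (s * f) = p 2 := by
          rw [← mul_assoc, div_mul_cancel₀ _ h0, hz]
        simp [this]
end

section
/- The Lebesgue volume of the convex hull in ℝ³ of the union of the two orthogonal unit disks D₁ = {(x,y,0) : x² + y² ≤ 1} and D₂ = {(x,0,z) : x² + z² ≤ 1} equals 8/3. -/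
open Real MeasureTheory

lemma lint_aux (f : ℝ → ℝ) (hf : Continuous f) (r : ℝ) (hr : 0 ≤ r)
    (h1 : ∀ y, |y| ≤ r → 0 ≤ f y) (h2 : ∀ y, r < |y| → f y ≤ 0) :
    ∫⁻ y, ENNReal.ofReal (f y) = ENNReal.ofReal (∫ y in (-r)..r, f y) := by
  rw [intervalIntegral.integral_of_le (by linarith), ← integral_Icc_eq_integral_Ioc,
    ofReal_integral_eq_lintegral_ofReal (hf.continuousOn.integrableOn_Icc),
    ← lintegral_indicator measurableSet_Icc]
  · congr 1
    ext y
    by_cases hy : |y| ≤ r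
    · rw [Set.indicator_of_mem (by simpa [Set.mem_Icc] using abs_le.1 hy)]
    · rw [Set.indicator_of_notMem (by simpa [Set.mem_Icc, abs_le] using hy)]
      exact ENNReal.ofReal_eq_zero.2 (h2 y (not_le.1 hy))
  · rw [Filter.EventuallyLE, ae_restrict_iff' measurableSet_Icc]
    exact Filter.Eventually.of_forall fun y hy => h1 y (abs_le.2 hy)

lemma int_abs_aux (r : ℝ) (hr : 0 ≤ r) : ∫ y in (-r)..r, 2 * (r - |y|) = 2 * r ^ 2 := by
  have hc : Continuous fun y : ℝ => 2 * (r - |y|) := by fun_prop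
  rw [← intervalIntegral.integral_add_adjacent_intervals (b := 0)
    (hc.intervalIntegrable _ _) (hc.intervalIntegrable _ _)]
  have e1 : ∫ y in (-r)..0, 2 * (r - |y|) = ∫ y in (-r)..0, (2 * r + 2 * y) := by
    apply intervalIntegral.integral_congr
    intro y hy
    rw [Set.uIcc_of_le (by linarith)] at hy
    simp only [abs_of_nonpos hy.2]; ring
  have e2 : ∫ y in (0)..r, 2 * (r - |y|) = ∫ y in (0)..r, (2 * r - 2 * y) := by
    apply intervalIntegral.integral_congr
    intro y hy
    rw [Set.uIcc_of_le (by linarith)] at hy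
    simp only [abs_of_nonneg hy.1]; ring
  rw [e1, e2, intervalIntegral.integral_add (by simp) (Continuous.intervalIntegrable (by fun_prop) _ _),
    intervalIntegral.integral_sub (by simp) (Continuous.intervalIntegrable (by fun_prop) _ _)]
  have g : ∀ a b : ℝ, ∫ y in a..b, 2 * y = b ^ 2 - a ^ 2 := by
    intro a b
    rw [intervalIntegral.integral_const_mul, integral_id]; ring
  rw [g, g]
  simp only [intervalIntegral.integral_const, smul_eq_mul]
  ring

lemma diamond_aux (x : ℝ) :
    volume {q : ℝ × ℝ | x ^ 2 + (|q.1| + |q.2|) ^ 2 ≤ 1} = ENNReal.ofReal (2 * (1 - x ^ 2)) := by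
  by_cases hx : x ^ 2 ≤ 1
  · set r := √(1 - x ^ 2) with hr
    have hr0 : 0 ≤ r := Real.sqrt_nonneg _
    have hr2 : r ^ 2 = 1 - x ^ 2 := Real.sq_sqrt (by linarith)
    have hS : {q : ℝ × ℝ | x ^ 2 + (|q.1| + |q.2|) ^ 2 ≤ 1} = {q : ℝ × ℝ | |q.1| + |q.2| ≤ r} := by
      ext q
      simp only [Set.mem_ofPred_eq]
      rw [← abs_of_nonneg (add_nonneg (abs_nonneg q.1) (abs_nonneg q.2)), ← abs_of_nonneg hr0,
        ← sq_le_sq, hr2, abs_of_nonneg (add_nonneg (abs_nonneg q.1) (abs_nonneg q.2))]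
      constructor <;> intro h <;> linarith
    have hm : MeasurableSet {q : ℝ × ℝ | |q.1| + |q.2| ≤ r} :=
      (isClosed_le (by fun_prop) (by fun_prop)).measurableSet
    rw [hS, Measure.volume_eq_prod, Measure.prod_apply hm, ← hr2, ← int_abs_aux r hr0,
      ← lint_aux _ (by fun_prop) r hr0 (fun y hy => by linarith) (fun y hy => by linarith)]
    congr 1
    ext y
    rw [← Real.volume_closedBall 0]
    congr 1
    ext z
    simp only [Set.mem_preimage, Set.mem_ofPred_eq, Metric.mem_closedBall, Real.dist_eq, sub_zero]
    constructor <;> intro h <;> linarith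
  · rw [ENNReal.ofReal_eq_zero.2 (by linarith)]
    convert measure_empty (μ := (volume : Measure (ℝ × ℝ)))
    ext q
    simp only [Set.mem_ofPred_eq, Set.mem_empty_iff_false, iff_false]
    nlinarith [sq_nonneg (|q.1| + |q.2|)]

lemma prod_vol_aux : volume {q : ℝ × ℝ × ℝ | q.1 ^ 2 + (|q.2.1| + |q.2.2|) ^ 2 ≤ 1}
    = ENNReal.ofReal (8 / 3) := by
  have hm : MeasurableSet {q : ℝ × ℝ × ℝ | q.1 ^ 2 + (|q.2.1| + |q.2.2|) ^ 2 ≤ 1} :=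
    (isClosed_le (by fun_prop) (by fun_prop)).measurableSet
  rw [Measure.volume_eq_prod, Measure.prod_apply hm]
  have : ∀ x : ℝ, volume (Prod.mk x ⁻¹' {q : ℝ × ℝ × ℝ | q.1 ^ 2 + (|q.2.1| + |q.2.2|) ^ 2 ≤ 1})
      = ENNReal.ofReal (2 * (1 - x ^ 2)) := fun x => diamond_aux x
  simp_rw [this]
  rw [lint_aux _ (by fun_prop) 1 zero_le_one]
  · congr 1
    rw [intervalIntegral.integral_const_mul, intervalIntegral.integral_sub (by simp)
      (Continuous.intervalIntegrable (by fun_prop) _ _), integral_pow]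
    norm_num
  · intro y hy
    have := (sq_le_one_iff_abs_le_one y).2 hy
    linarith
  · intro y hy
    have := (one_lt_sq_iff_one_lt_abs y).2 hy
    linarith

lemma hull_aux : convexHull ℝ
      ({p : EuclideanSpace ℝ (Fin 3) | (p 0) ^ 2 + (p 1) ^ 2 ≤ 1 ∧ p 2 = 0} ∪
       {p : EuclideanSpace ℝ (Fin 3) | (p 0) ^ 2 + (p 2) ^ 2 ≤ 1 ∧ p 1 = 0}) =
    {p : EuclideanSpace ℝ (Fin 3) | (p 0) ^ 2 + (|p 1| + |p 2|) ^ 2 ≤ 1} := by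
  apply Set.Subset.antisymm
  · apply convexHull_min
    · rintro p (⟨h, h0⟩ | ⟨h, h0⟩) <;> simpa [h0] using h
    · intro p hp q hq a b ha hb hab
      simp only [Set.mem_ofPred_eq, PiLp.add_apply, PiLp.smul_apply, smul_eq_mul] at *
      have k1 : |a * p 1 + b * q 1| ≤ a * |p 1| + b * |q 1| := by
        refine (abs_add_le _ _).trans ?_
        rw [abs_mul, abs_mul, abs_of_nonneg ha, abs_of_nonneg hb]
      have k2 : |a * p 2 + b * q 2| ≤ a * |p 2| + b * |q 2| := by
        refine (abs_add_le _ _).trans ?_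
        rw [abs_mul, abs_mul, abs_of_nonneg ha, abs_of_nonneg hb]
      have k3 : (|a * p 1 + b * q 1| + |a * p 2 + b * q 2|) ^ 2
          ≤ (a * (|p 1| + |p 2|) + b * (|q 1| + |q 2|)) ^ 2 := by
        apply pow_le_pow_left₀ (by positivity)
        linarith
      generalize |p 1| + |p 2| = s at *
      generalize |q 1| + |q 2| = t at *
      generalize p 0 = x at *
      generalize q 0 = y at *
      obtain rfl : b = 1 - a := by linarith
      nlinarith [mul_nonneg (mul_nonneg ha hb) (add_nonneg (sq_nonneg (x - y)) (sq_nonneg (s - t))),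
        mul_le_mul_of_nonneg_left hp ha, mul_le_mul_of_nonneg_left hq hb]
  · intro p hp
    simp only [Set.mem_ofPred_eq] at hp
    set s := |p 1| + |p 2| with hs
    have a1 := abs_nonneg (p 1)
    have a2 := abs_nonneg (p 2)
    rcases (add_nonneg a1 a2).eq_or_lt with h0 | h0
    · apply subset_convexHull
      left
      have e1 : p 1 = 0 := abs_eq_zero.1 (by linarith)
      have e2 : p 2 = 0 := abs_eq_zero.1 (by linarith)
      refine ⟨?_, e2⟩
      rw [e1]; nlinarith [sq_nonneg s]
    · rw [← hs] at h0
      have key : ∀ t : ℝ, (SignType.sign t : ℝ) ^ 2 ≤ 1 := by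
        intro t
        rcases lt_trichotomy t 0 with h | h | h <;> simp [h]
      have kk : ∀ t : ℝ, (p 0) ^ 2 + ((SignType.sign t : ℝ) * s) ^ 2 ≤ 1 := by
        intro t
        rw [mul_pow]
        nlinarith [key t, sq_nonneg s]
      have m1 : !₂[p 0, (SignType.sign (p 1) : ℝ) * s, 0] ∈ 
        ({p : EuclideanSpace ℝ (Fin 3) | (p 0) ^ 2 + (p 1) ^ 2 ≤ 1 ∧ p 2 = 0} ∪
         {p : EuclideanSpace ℝ (Fin 3) | (p 0) ^ 2 + (p 2) ^ 2 ≤ 1 ∧ p 1 = 0}) := by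
        left
        simpa using kk (p 1)
      have m2 : !₂[p 0, 0, (SignType.sign (p 2) : ℝ) * s] ∈ 
        ({p : EuclideanSpace ℝ (Fin 3) | (p 0) ^ 2 + (p 1) ^ 2 ≤ 1 ∧ p 2 = 0} ∪
         {p : EuclideanSpace ℝ (Fin 3) | (p 0) ^ 2 + (p 2) ^ 2 ≤ 1 ∧ p 1 = 0}) := by
        right
        simpa using kk (p 2)
      have := (convex_convexHull ℝ _) (subset_convexHull ℝ _ m1) (subset_convexHull ℝ _ m2)
        (a := |p 1| / s) (b := |p 2| / s) (by positivity) (by positivity)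
        (by rw [← add_div, ← hs, div_self h0.ne'])
      convert this using 1
      have d1 : |p 1| / s * ((SignType.sign (p 1) : ℝ) * s) = p 1 := by
        rw [show |p 1| / s * ((SignType.sign (p 1) : ℝ) * s)
          = (SignType.sign (p 1) : ℝ) * |p 1| by field_simp, sign_mul_abs]
      have d2 : |p 2| / s * ((SignType.sign (p 2) : ℝ) * s) = p 2 := by
        rw [show |p 2| / s * ((SignType.sign (p 2) : ℝ) * s)
          = (SignType.sign (p 2) : ℝ) * |p 2| by field_simp, sign_mul_abs]
      have d0 : |p 1| / s * p 0 + |p 2| / s * p 0 = p 0 := by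
        rw [← add_mul, ← add_div, ← hs, div_self h0.ne', one_mul]
      ext i
      fin_cases i
      · simpa using d0.symm
      · simpa using d1.symm
      · simpa using d2.symm

/-- The Lebesgue volume of the convex hull in ℝ³ of the union of the two
orthogonal unit disks D₁ = {(x,y,0) : x² + y² ≤ 1} and D₂ = {(x,0,z) : x² + z² ≤ 1}
equals 8/3. -/
theorem volume_convexHull_two_orthogonal_disks_common_center :
    volume (convexHull ℝ
      ({p : EuclideanSpace ℝ (Fin 3) | (p 0) ^ 2 + (p 1) ^ 2 ≤ 1 ∧ p 2 = 0} ∪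
       {p : EuclideanSpace ℝ (Fin 3) | (p 0) ^ 2 + (p 2) ^ 2 ≤ 1 ∧ p 1 = 0})) =
    ENNReal.ofReal (8 / 3) := by
  rw [hull_aux, ← prod_vol_aux]
  have hm : MeasurableSet {q : ℝ × ℝ × ℝ | q.1 ^ 2 + (|q.2.1| + |q.2.2|) ^ 2 ≤ 1} :=
    (isClosed_le (by fun_prop) (by fun_prop)).measurableSet
  have A := PiLp.volume_preserving_ofLp (Fin 3)
  have B := volume_preserving_piFinSuccAbove (fun _ : Fin 3 => ℝ) 0
  have C := (MeasurePreserving.id (volume : Measure ℝ)).prod (volume_preserving_finTwoArrow ℝ)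
  have D := C.comp (B.comp A)
  have E := D.measure_preimage hm.nullMeasurableSet
  exact E
end

section
/- The surface-area integral 4 ∫_{x=-1}^{1} ∫_{y=0}^{√(1−x²)} √((2 − x²)/(1 − x²)) dy dx equals 2(2 + π). -/
open Real

/-- 4 ∫_{x=-1}^{1} ∫_{y=0}^{√(1−x²)} √((2 − x²)/(1 − x²)) dy dx = 2(2 + π). -/
theorem surface_area_integral_example_one :
    4 * ∫ x in (-1 : ℝ)..1, ∫ _y in (0 : ℝ)..Real.sqrt (1 - x ^ 2),
        Real.sqrt ((2 - x ^ 2) / (1 - x ^ 2)) =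
      2 * (2 + Real.pi) := by
  have h1 : (∫ x in (-1 : ℝ)..1, ∫ _y in (0 : ℝ)..Real.sqrt (1 - x ^ 2),
        Real.sqrt ((2 - x ^ 2) / (1 - x ^ 2))) = ∫ x in (-1 : ℝ)..1, Real.sqrt (2 - x ^ 2) := by
    apply intervalIntegral.integral_congr_ae
    have hne : ∀ᵐ x : ℝ ∂MeasureTheory.volume, x ≠ 1 := by
      simp [MeasureTheory.ae_iff]
    filter_upwards [hne] with x hx hm
    rw [Set.uIoc_of_le (by norm_num)] at hm
    have hlt : x < 1 := lt_of_le_of_ne hm.2 hx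
    have hp : 0 < 1 - x ^ 2 := by nlinarith [hm.1]
    rw [intervalIntegral.integral_const, smul_eq_mul, sub_zero, ← Real.sqrt_mul hp.le]
    congr 1
    field_simp
  have hs2 : (0 : ℝ) < √2 := by positivity
  have hsq : √2 ^ 2 = (2 : ℝ) := Real.sq_sqrt (by norm_num)
  have h2 : (∫ x in (-1 : ℝ)..1, Real.sqrt (2 - x ^ 2)) =
      (1 / 2 * √(2 - 1 ^ 2) + arcsin (1 / √2)) - ((-1) / 2 * √(2 - (-1) ^ 2) + arcsin ((-1) / √2)) := by
    apply intervalIntegral.integral_eq_sub_of_hasDerivAt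
      (f := fun x => x / 2 * √(2 - x ^ 2) + arcsin (x / √2))
    · intro x hx
      rw [Set.uIcc_of_le (by norm_num)] at hx
      have hp : 0 < 2 - x ^ 2 := by nlinarith [hx.1, hx.2]
      have hq : 0 < √(2 - x ^ 2) := Real.sqrt_pos.2 hp
      have hqq : √(2 - x ^ 2) ^ 2 = 2 - x ^ 2 := Real.sq_sqrt hp.le
      have hlt : x / √2 < 1 := by
        rw [div_lt_one hs2]; nlinarith [hx.2]
      have hgt : -1 < x / √2 := by
        rw [lt_div_iff₀ hs2]; nlinarith [hx.1]
      have ha := (Real.hasDerivAt_arcsin hgt.ne' hlt.ne).comp x ((hasDerivAt_id x).div_const √2)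
      have hb := ((hasDerivAt_id x).div_const 2).mul
        ((((hasDerivAt_id x).pow 2).const_sub 2).sqrt hp.ne')
      refine (hb.add ha).congr_deriv ?_
      have e : √(1 - (x / √2) ^ 2) = √(2 - x ^ 2) / √2 := by
        rw [← Real.sqrt_div hp.le]
        congr 1
        rw [div_pow, hsq]; ring
      simp only [id, e]
      simp
      field_simp
      rw [hqq]; ring
    · apply Continuous.intervalIntegrable
      fun_prop
  have h3 : arcsin (1 / √2) = π / 4 := by
    apply Real.arcsin_eq_of_sin_eq
    · rw [Real.sin_pi_div_four]
      field_simp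
      linarith
    · constructor <;> linarith [Real.pi_pos]
  rw [h1, h2, neg_div √2, Real.arcsin_neg, h3]
  norm_num
  ring
end

section
/- One has (2/π) ∫_{x=-1}^{1} ∫_{y=0}^{√(1−x²)} 1/((2 − x²)√(1 − x²)) dy dx + (2/π) ∫_{θ=0}^{π} arccos(1/√(2 − cos²θ)) dθ = −(1/π) ( 2√2 · ln(−1 + √2) − 4 Li₂(−1 + √2) + 4 Li₂(1 − √2) ), where Li₂ denotes the dilogarithm. -/
open Real

/-- The dilogarithm Li₂(x) = ∑_{k=1}^∞ x^k / k². -/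
noncomputable def Li2 (x : ℝ) : ℝ := ∑' k : ℕ, x ^ (k + 1) / ((k : ℝ) + 1) ^ 2

lemma aux_series (b θ : ℝ) (hb : |b| < 1) :
    HasSum (fun n : ℕ => b ^ (n + 1) * Real.sin (((n : ℝ) + 1) * θ) / ((n : ℝ) + 1))
      (Real.arctan (b * Real.sin θ / (1 - b * Real.cos θ))) := by
  set z : ℂ := (b : ℂ) * Complex.exp (θ * Complex.I) with hz
  have hn : ‖z‖ < 1 := by
    rw [hz, norm_mul, Complex.norm_exp_ofReal_mul_I, Complex.norm_real]
    simpa using hb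
  have h := Complex.hasSum_im (Complex.hasSum_taylorSeries_neg_log' hn)
  have hre : (1 - z).re = 1 - b * Real.cos θ := by
    simp [hz, Complex.exp_ofReal_mul_I_re]
  have him : (1 - z).im = -(b * Real.sin θ) := by
    simp [hz, Complex.exp_ofReal_mul_I_im]
  have hpos : 0 < (1 - z).re := by
    have := (Complex.abs_re_le_norm z).trans_lt hn
    have := (abs_lt.mp this).2
    simp only [Complex.sub_re, Complex.one_re]; linarith
  have harg := Complex.abs_arg_lt_pi_div_two_iff.2 (Or.inl hpos)
  have h2 : (-Complex.log (1 - z)).im =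
      Real.arctan (b * Real.sin θ / (1 - b * Real.cos θ)) := by
    rw [Complex.neg_im, Complex.log_im,
      ← Real.arctan_tan (abs_lt.mp harg).1 (abs_lt.mp harg).2, Complex.tan_arg, hre, him,
      neg_div, Real.arctan_neg, neg_neg]
  rw [h2] at h
  convert h using 2 with n
  have e : z ^ (n + 1) / ((n : ℂ) + 1) =
      ((b ^ (n + 1) / ((n : ℝ) + 1) : ℝ) : ℂ) *
        Complex.exp (((((n : ℝ) + 1) * θ : ℝ) : ℂ) * Complex.I) := by
    rw [hz, mul_pow, ← Complex.exp_nat_mul]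
    push_cast
    rw [mul_div_right_comm]
    congr 2
    ring
  rw [e, Complex.im_ofReal_mul, Complex.exp_ofReal_mul_I_im]
  ring

lemma aux_a : 0 < -1 + √2 ∧ -1 + √2 < 1 ∧ (-1 + √2) ^ 2 = 1 - 2 * (-1 + √2) := by
  have h := Real.sq_sqrt (show (0 : ℝ) ≤ 2 by norm_num)
  have h0 := Real.sqrt_nonneg 2
  refine ⟨by nlinarith, by nlinarith, by nlinarith⟩

lemma aux_arctan (a θ : ℝ) (h0 : 0 < a) (h1 : a < 1) (h2 : a ^ 2 = 1 - 2 * a) :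
    Real.arctan (a * Real.sin θ / (1 - a * Real.cos θ))
      - Real.arctan (-a * Real.sin θ / (1 - -a * Real.cos θ)) = Real.arctan (Real.sin θ) := by
  have hc1 := Real.cos_le_one θ
  have hc2 := Real.neg_one_le_cos θ
  have hs := Real.sin_sq_add_cos_sq θ
  have p1 : 0 < 1 - a * Real.cos θ := by nlinarith
  have p2 : 0 < 1 + a * Real.cos θ := by nlinarith
  have e1 : -a * Real.sin θ / (1 - -a * Real.cos θ)
      = -(a * Real.sin θ / (1 + a * Real.cos θ)) := by
    rw [← neg_div]; ring_nf
  have key : (1 - a * Real.cos θ) * (1 + a * Real.cos θ)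
      - (a * Real.sin θ) * (a * Real.sin θ) = 2 * a := by
    linear_combination (-a ^ 2) * hs - h2
  have e2 : 1 - a * Real.sin θ / (1 - a * Real.cos θ) * (a * Real.sin θ / (1 + a * Real.cos θ))
      = 2 * a / ((1 - a * Real.cos θ) * (1 + a * Real.cos θ)) := by
    rw [← key]; field_simp
  have p3 : 0 < 2 * a / ((1 - a * Real.cos θ) * (1 + a * Real.cos θ)) := by positivity
  rw [e1, Real.arctan_neg, sub_neg_eq_add, Real.arctan_add (by linarith), e2]
  congr 1
  field_simp
  ring

lemma aux_int_sin (n : ℕ) : ∫ θ in (0 : ℝ)..π, Real.sin (((n : ℝ) + 1) * θ)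
    = (1 - (-1) ^ (n + 1)) / ((n : ℝ) + 1) := by
  have hn : ((n : ℝ) + 1) ≠ 0 := by positivity
  rw [intervalIntegral.integral_comp_mul_left _ hn, integral_sin]
  have := Real.cos_nat_mul_pi (n + 1)
  push_cast at this
  rw [this]
  simp
  ring

lemma aux_Li2 (b : ℝ) (hb : |b| < 1) :
    HasSum (fun k : ℕ => b ^ (k + 1) / ((k : ℝ) + 1) ^ 2) (Li2 b) := by
  apply Summable.hasSum
  have hs := (summable_geometric_of_lt_one (abs_nonneg b) hb)
  refine Summable.of_norm_bounded hs fun k => ?_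
  rw [norm_div, norm_pow, Real.norm_eq_abs, Real.norm_of_nonneg (by positivity)]
  rw [div_le_iff₀ (by positivity), pow_succ]
  have : 0 ≤ |b| ^ k := by positivity
  have hk : (1 : ℝ) ≤ ((k : ℝ) + 1) ^ 2 := by nlinarith [(Nat.cast_nonneg k : (0 : ℝ) ≤ k)]
  exact mul_le_mul_of_nonneg_left (hb.le.trans hk) this

lemma aux_second : ∫ θ in (0 : ℝ)..π, Real.arctan (Real.sin θ)
    = 2 * (Li2 (-1 + √2) - Li2 (1 - √2)) := by
  obtain ⟨h0, h1, h2⟩ := aux_a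
  have en : 1 - √2 = -(-1 + √2) := by ring
  rw [en]
  generalize -1 + √2 = a at *
  have ha : |a| < 1 := by rwa [abs_of_pos h0]
  have hna : |-a| < 1 := by rwa [abs_neg]
  have hsum : HasSum (fun n : ℕ => ∫ θ in (0 : ℝ)..π,
      (a ^ (n + 1) - (-a) ^ (n + 1)) / ((n : ℝ) + 1) * Real.sin (((n : ℝ) + 1) * θ))
      (∫ θ in (0 : ℝ)..π, Real.arctan (Real.sin θ)) := by
    refine intervalIntegral.hasSum_integral_of_dominated_convergence
      (fun n _ => 2 * a ^ n) ?_ ?_ ?_ ?_ ?_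
    · intro n
      exact (by fun_prop : Continuous _).aestronglyMeasurable
    · intro n
      refine Filter.Eventually.of_forall fun θ _ => ?_
      rw [norm_mul, norm_div, Real.norm_of_nonneg (show (0 : ℝ) ≤ (n : ℝ) + 1 by positivity)]
      have hs : ‖Real.sin (((n : ℝ) + 1) * θ)‖ ≤ 1 := Real.abs_sin_le_one _
      have hp : a ^ (n + 1) ≤ a ^ n := pow_le_pow_of_le_one h0.le h1.le (Nat.le_succ n)
      have hq : ‖a ^ (n + 1) - (-a) ^ (n + 1)‖ ≤ 2 * a ^ n := by
        refine (norm_sub_le _ _).trans ?_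
        rw [norm_pow, norm_pow, norm_neg, Real.norm_of_nonneg h0.le]
        linarith
      have hd : ‖a ^ (n + 1) - (-a) ^ (n + 1)‖ / ((n : ℝ) + 1) ≤ 2 * a ^ n :=
        (div_le_self (norm_nonneg _) (by simp)).trans hq
      calc _ ≤ 2 * a ^ n * 1 := by gcongr
        _ = _ := mul_one _
    · exact Filter.Eventually.of_forall fun θ _ =>
        (summable_geometric_of_lt_one h0.le h1).mul_left 2
    · exact intervalIntegrable_const
    · refine Filter.Eventually.of_forall fun θ _ => ?_
      have := (aux_series a θ ha).sub (aux_series (-a) θ hna)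
      rw [aux_arctan a θ h0 h1 h2] at this
      convert this using 2 with n
      ring
  refine hsum.unique ?_
  have hL := ((aux_Li2 a ha).sub (aux_Li2 (-a) hna)).mul_left 2
  suffices hE : ∀ n : ℕ, (∫ θ in (0 : ℝ)..π,
      (a ^ (n + 1) - (-a) ^ (n + 1)) / ((n : ℝ) + 1) * Real.sin (((n : ℝ) + 1) * θ)) =
      2 * (a ^ (n + 1) / ((n : ℝ) + 1) ^ 2 - (-a) ^ (n + 1) / ((n : ℝ) + 1) ^ 2) by
    simpa only [hE] using hL
  intro n
  rw [intervalIntegral.integral_const_mul, aux_int_sin, neg_pow]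
  have hn : ((n : ℝ) + 1) ≠ 0 := by positivity
  have hm : ((-1 : ℝ) ^ (n + 1)) ^ 2 = 1 := by rw [← pow_mul, mul_comm, pow_mul]; simp
  generalize (n : ℝ) + 1 = N at *
  linear_combination (a ^ (n + 1) / N ^ 2) * hm

lemma aux_arccos : ∫ θ in (0 : ℝ)..π, Real.arccos (1 / √(2 - Real.cos θ ^ 2))
    = ∫ θ in (0 : ℝ)..π, Real.arctan (Real.sin θ) := by
  refine intervalIntegral.integral_congr_Ioo_of_le pi_pos.le fun θ hθ => ?_
  have hs := Real.sin_nonneg_of_nonneg_of_le_pi hθ.1.le hθ.2.le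
  have e : 2 - Real.cos θ ^ 2 = 1 + Real.sin θ ^ 2 := by
    linarith [Real.sin_sq_add_cos_sq θ]
  simp only [e, one_div]
  rw [Real.arctan_eq_arccos hs]

lemma aux_first : (∫ x in (-1 : ℝ)..1, ∫ _y in (0 : ℝ)..√(1 - x ^ 2),
        1 / ((2 - x ^ 2) * √(1 - x ^ 2))) = -(√2 * Real.log (-1 + √2)) := by
  have h2 := Real.sq_sqrt (show (0 : ℝ) ≤ 2 by norm_num)
  have h0 : 1 < √2 := by rw [Real.lt_sqrt] <;> norm_num
  have e : (∫ x in (-1 : ℝ)..1, ∫ _y in (0 : ℝ)..√(1 - x ^ 2),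
        1 / ((2 - x ^ 2) * √(1 - x ^ 2))) = ∫ x in (-1 : ℝ)..1, 1 / (2 - x ^ 2) := by
    refine intervalIntegral.integral_congr_Ioo_of_le (by norm_num) fun x hx => ?_
    have hp : 0 < 1 - x ^ 2 := by nlinarith [hx.1, hx.2]
    have hq : 0 < √(1 - x ^ 2) := Real.sqrt_pos.2 hp
    have hr : 2 - x ^ 2 ≠ 0 := by linarith
    simp only [intervalIntegral.integral_const, smul_eq_mul, sub_zero]
    field_simp
  have hne : ∀ x ∈ Set.uIcc (-1 : ℝ) 1, 2 - x ^ 2 ≠ 0 := by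
    intro x hx
    rw [Set.uIcc_of_le (by norm_num)] at hx
    nlinarith [hx.1, hx.2]
  rw [e, intervalIntegral.integral_eq_sub_of_hasDerivAt
    (f := fun x => (1 / (2 * √2)) * (Real.log (√2 + x) - Real.log (√2 - x)))]
  · have l : Real.log (√2 + 1) = - Real.log (-1 + √2) := by
      rw [← Real.log_inv]
      congr 1
      refine eq_inv_of_mul_eq_one_left ?_
      linear_combination h2
    have e1 : √2 + -1 = -1 + √2 := by ring
    have e2 : √2 - 1 = -1 + √2 := by ring
    have e3 : √2 - -1 = √2 + 1 := by ring
    rw [e1, e2, e3, l]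
    field_simp
    rw [h2]; ring
  · intro x hx
    have hd := hne x hx
    rw [Set.uIcc_of_le (by norm_num)] at hx
    have q1 : √2 + x ≠ 0 := by linarith [hx.1]
    have q2 : √2 - x ≠ 0 := by linarith [hx.2]
    have d := ((((hasDerivAt_id x).const_add √2).log q1).sub
      (((hasDerivAt_id x).const_sub √2).log q2)).const_mul (1 / (2 * √2))
    refine HasDerivAt.congr_deriv d ?_
    simp only [id]
    have e : 2 - x ^ 2 = (√2 + x) * (√2 - x) := by linear_combination -h2
    rw [e]
    field_simp
    ring
  · exact (ContinuousOn.div (by fun_prop) (by fun_prop) hne).intervalIntegrable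

/-- mean-width identity (indirect approach) for the convex hull of two
orthogonal unit disks through a common center. -/
theorem mean_width_example_one_indirect :
    (2 / Real.pi) * (∫ x in (-1 : ℝ)..1, ∫ _y in (0 : ℝ)..Real.sqrt (1 - x ^ 2),
        1 / ((2 - x ^ 2) * Real.sqrt (1 - x ^ 2))) +
      (2 / Real.pi) * (∫ θ in (0 : ℝ)..Real.pi,
        Real.arccos (1 / Real.sqrt (2 - Real.cos θ ^ 2))) =
    -(1 / Real.pi) * (2 * Real.sqrt 2 * Real.log (-1 + Real.sqrt 2)
      - 4 * Li2 (-1 + Real.sqrt 2) + 4 * Li2 (1 - Real.sqrt 2)) := by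
  rw [aux_first, aux_arccos, aux_second]
  ring
end

section
/- One has (8/π) ∫_{θ=0}^{π/2} ∫_{φ=ξ(θ)}^{π/2} sin²φ dφ dθ = −(1/π) ( 2√2 · ln(−1 + √2) − 4 Li₂(−1 + √2) + 4 Li₂(1 − √2) ), where ξ(θ) = arccos( sin θ / √(2 − cos²θ) ) and Li₂ denotes the dilogarithm. -/
open Real

lemma mw_inner (θ : ℝ) :
    (∫ φ in (Real.arccos (Real.sin θ / Real.sqrt (2 - Real.cos θ ^ 2)))..(Real.pi / 2),
          Real.sin φ ^ 2) = 1 / 2 * (Real.arctan (Real.sin θ) + Real.sin θ / (1 + Real.sin θ ^ 2)) := by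
  have h2 : 2 - Real.cos θ ^ 2 = 1 + Real.sin θ ^ 2 := by
    have := Real.sin_sq_add_cos_sq θ
    linarith
  rw [h2, integral_sin_sq, Real.arctan_eq_arcsin]
  set s := Real.sin θ
  have hp : (0:ℝ) < 1 + s ^ 2 := by positivity
  have hq : 0 < √(1 + s ^ 2) := Real.sqrt_pos.mpr hp
  have hsq : √(1 + s ^ 2) ^ 2 = 1 + s ^ 2 := Real.sq_sqrt hp.le
  have hu : |s / √(1 + s ^ 2)| ≤ 1 := by
    rw [← sq_le_one_iff_abs_le_one, div_pow, hsq, div_le_one hp]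
    linarith
  rw [Real.sin_arccos, Real.cos_arccos (abs_le.mp hu).1 (abs_le.mp hu).2, Real.arccos]
  have h1 : √(1 - (s / √(1 + s ^ 2)) ^ 2) = 1 / √(1 + s ^ 2) := by
    rw [div_pow, hsq, ← Real.sqrt_one, ← Real.sqrt_div (by norm_num), Real.sqrt_one]
    congr 1
    field_simp
    ring
  have h3 : 1 / √(1 + s ^ 2) * (s / √(1 + s ^ 2)) = s / (1 + s ^ 2) := by
    rw [div_mul_div_comm, ← sq, hsq, one_mul]
  rw [h1, h3]
  simp
  ring

lemma mw_second : (∫ θ in (0:ℝ)..(π / 2), Real.sin θ / (1 + Real.sin θ ^ 2)) =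
    -(1 / √2) * Real.log (-1 + √2) := by
  have h2 : √2 ^ 2 = (2:ℝ) := Real.sq_sqrt (by norm_num)
  have h1 : 1 < √2 := by
    rw [Real.lt_sqrt (by norm_num)]; norm_num
  have hd : ∀ θ ∈ Set.uIcc (0:ℝ) (π / 2), HasDerivAt
      (fun θ => -(1 / (2 * √2)) * (Real.log (√2 + Real.cos θ) - Real.log (√2 - Real.cos θ)))
      (Real.sin θ / (1 + Real.sin θ ^ 2)) θ := by
    intro θ _
    have c1 := Real.cos_le_one θ
    have c2 := Real.neg_one_le_cos θ
    have p1 : √2 + Real.cos θ ≠ 0 := by linarith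
    have p2 : √2 - Real.cos θ ≠ 0 := by linarith
    have a1 := ((Real.hasDerivAt_cos θ).const_add (√2)).log p1
    have a2 := ((Real.hasDerivAt_cos θ).const_sub (√2)).log p2
    refine ((a1.sub a2).const_mul (-(1 / (2 * √2)))).congr_deriv ?_
    have h3 : 1 + Real.sin θ ^ 2 = (√2 + Real.cos θ) * (√2 - Real.cos θ) := by
      have := Real.sin_sq_add_cos_sq θ
      nlinarith
    rw [h3]
    field_simp
    ring
  rw [intervalIntegral.integral_eq_sub_of_hasDerivAt hd]
  · have h4 : Real.log (√2 + 1) = - Real.log (-1 + √2) := by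
      rw [← Real.log_inv]
      congr 1
      apply eq_inv_of_mul_eq_one_left
      nlinarith
    have h5 : √2 - 1 = -1 + √2 := by ring
    simp only [Real.cos_pi_div_two, Real.cos_zero, h4, h5]
    field_simp
    ring
  · apply Continuous.intervalIntegrable
    refine Real.continuous_sin.div (by fun_prop) (fun x => by positivity)

lemma mw_arg {z : ℂ} (hz : 0 < z.re) : (Complex.log z).im = Real.arctan (z.im / z.re) := by
  rw [Complex.log_im, ← Complex.tan_arg]
  have := Complex.abs_arg_lt_pi_div_two_iff.mpr (Or.inl hz)
  rw [Real.arctan_tan (abs_lt.mp this).1 (abs_lt.mp this).2]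

lemma mw_series (a θ : ℝ) (ha0 : 0 < a) (ha1 : a < 1) (ha : 2 * a = 1 - a ^ 2) :
    HasSum (fun k : ℕ => (a ^ (k + 1) - (-a) ^ (k + 1)) * Real.sin ((k + 1) * θ) / (k + 1))
      (Real.arctan (Real.sin θ)) := by
  set z : ℂ := a * Complex.exp (θ * Complex.I) with hz
  have hn : ‖z‖ < 1 := by
    rw [hz, norm_mul, Complex.norm_exp_ofReal_mul_I, mul_one, Complex.norm_real, Real.norm_eq_abs,
      abs_of_pos ha0]
    exact ha1
  have s1 := Complex.hasSum_taylorSeries_neg_log hn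
  have s2 := Complex.hasSum_taylorSeries_neg_log (z := -z) (by rwa [norm_neg])
  have s3 := Complex.imCLM.hasSum (s1.sub s2)
  have hre : z.re = a * Real.cos θ := by
    simp [hz, Complex.exp_ofReal_mul_I_re, Complex.exp_ofReal_mul_I_im]
  have him : z.im = a * Real.sin θ := by
    simp [hz, Complex.exp_ofReal_mul_I_re, Complex.exp_ofReal_mul_I_im]
  have c1 := Real.cos_le_one θ
  have c2 := Real.neg_one_le_cos θ
  have q1 : 0 < 1 - a * Real.cos θ := by nlinarith
  have q2 : 0 < 1 + a * Real.cos θ := by nlinarith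
  have hval : Complex.imCLM (-Complex.log (1 - z) - -Complex.log (1 - -z)) =
      Real.arctan (Real.sin θ) := by
    have e1 : 0 < (1 - z).re := by simpa [hre] using q1
    have e2 : 0 < (1 - -z).re := by simpa [hre] using q2
    rw [Complex.imCLM_apply, Complex.sub_im, Complex.neg_im, Complex.neg_im, mw_arg e1, mw_arg e2]
    simp only [Complex.sub_im, Complex.sub_re, Complex.neg_im, Complex.neg_re, Complex.one_im,
      Complex.one_re, hre, him]
    have t := Real.sin_sq_add_cos_sq θ
    rw [← Real.arctan_neg, sub_neg_eq_add, Real.arctan_add]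
    · congr 1
      have q2' : 0 < 1 - -(a * Real.cos θ) := by linarith
      have hden : (1 - a * cos θ) * (1 - -(a * cos θ)) - (a * sin θ) * (a * sin θ) = 1 - a ^ 2 := by
        nlinarith
      have hpos : 0 < 1 - a ^ 2 := by nlinarith
      have g : 1 - -((0 - a * sin θ) / (1 - a * cos θ)) * ((0 - -(a * sin θ)) / (1 - -(a * cos θ)))
          = (1 - a ^ 2) / ((1 - a * cos θ) * (1 - -(a * cos θ))) := by
        rw [← hden]
        field_simp
        ring
      rw [g, ← ha]
      field_simp
      ring
    · have q2' : 0 < 1 - -(a * Real.cos θ) := by linarith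
      rw [← neg_div, div_mul_div_comm, div_lt_one (by positivity)]
      nlinarith
  rw [hval] at s3
  rw [← hasSum_nat_add_iff' 1] at s3
  have hfin : Real.arctan (Real.sin θ) - ∑ i ∈ Finset.range 1,
      Complex.imCLM (z ^ i / (i : ℂ) - (-z) ^ i / (i : ℂ)) = Real.arctan (Real.sin θ) := by
    simp
  rw [hfin] at s3
  have hfun : ∀ k : ℕ, Complex.imCLM (z ^ (k + 1) / ((k + 1 : ℕ) : ℂ) - (-z) ^ (k + 1) / ((k + 1 : ℕ) : ℂ)) =
      (a ^ (k + 1) - (-a) ^ (k + 1)) * Real.sin ((k + 1) * θ) / (k + 1) := by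
    intro k
    have hp : (z ^ (k + 1)).im = a ^ (k + 1) * Real.sin ((k + 1) * θ) := by
      rw [hz, mul_pow, ← Complex.exp_nat_mul, ← Complex.ofReal_pow, Complex.im_ofReal_mul]
      congr 1
      rw [← Complex.exp_ofReal_mul_I_im]
      congr 2
      push_cast
      ring
    have hc : (z ^ (k + 1) / ((k + 1 : ℕ) : ℂ) - (-z) ^ (k + 1) / ((k + 1 : ℕ) : ℂ)) =
        (((1 - (-1) ^ (k + 1)) / (k + 1) : ℝ) : ℂ) * z ^ (k + 1) := by
      rw [neg_pow z]
      push_cast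
      ring
    rw [hc, Complex.imCLM_apply, Complex.im_ofReal_mul, hp, neg_pow a]
    ring
  simp only [hfun] at s3
  exact s3

lemma mw_coef (a : ℝ) (k : ℕ) : (∫ θ in (0:ℝ)..(π / 2),
    (a ^ (k + 1) - (-a) ^ (k + 1)) * Real.sin ((k + 1) * θ) / (k + 1)) =
    a ^ (k + 1) / ((k : ℝ) + 1) ^ 2 - (-a) ^ (k + 1) / ((k : ℝ) + 1) ^ 2 := by
  have hk : (k : ℝ) + 1 ≠ 0 := by positivity
  rw [intervalIntegral.integral_div, intervalIntegral.integral_const_mul,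
    intervalIntegral.integral_comp_mul_left (fun x => Real.sin x) hk, integral_sin]
  rcases Nat.even_or_odd k with h | h
  · obtain ⟨m, rfl⟩ := h
    have : Real.cos ((((m + m : ℕ) : ℝ) + 1) * (π / 2)) = 0 := by
      rw [Real.cos_eq_zero_iff]
      exact ⟨m, by push_cast; ring⟩
    rw [this]
    simp
    field_simp
  · have : Even (k + 1) := h.add_one
    rw [this.neg_pow]
    simp

lemma mw_first (a : ℝ) (ha0 : 0 < a) (ha1 : a < 1) (ha : 2 * a = 1 - a ^ 2) :
    (∫ θ in (0:ℝ)..(π / 2), Real.arctan (Real.sin θ)) = Li2 a - Li2 (-a) := by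
  have hg : Summable (fun k : ℕ => a ^ (k + 1)) :=
    (summable_nat_add_iff 1).mpr (summable_geometric_of_lt_one ha0.le ha1)
  have hs : ∀ b : ℝ, |b| = a → Summable (fun k : ℕ => b ^ (k + 1) / ((k : ℝ) + 1) ^ 2) := by
    intro b hb
    refine Summable.of_norm_bounded hg (fun k => ?_)
    rw [norm_div, norm_pow, Real.norm_eq_abs, hb]
    apply div_le_self (by positivity)
    rw [norm_pow, Real.norm_eq_abs, abs_of_pos (by positivity)]
    exact one_le_pow₀ (by linarith [Nat.cast_nonneg (α := ℝ) k])
  have H := intervalIntegral.hasSum_integral_of_dominated_convergence (μ := MeasureTheory.volume)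
    (a := 0) (b := π / 2)
    (F := fun (k : ℕ) (θ : ℝ) =>
      (a ^ (k + 1) - (-a) ^ (k + 1)) * Real.sin ((k + 1) * θ) / (k + 1))
    (f := fun θ => Real.arctan (Real.sin θ))
    (fun k _ => 2 * a ^ (k + 1))
    (fun k => by
      apply Continuous.aestronglyMeasurable
      fun_prop)
    (fun k => by
      refine Filter.Eventually.of_forall (fun θ _ => ?_)
      rw [norm_div, norm_mul, Real.norm_eq_abs, Real.norm_eq_abs, Real.norm_eq_abs]
      have b1 : |a ^ (k + 1) - (-a) ^ (k + 1)| ≤ 2 * a ^ (k + 1) := by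
        refine (abs_sub _ _).trans ?_
        rw [abs_pow, abs_pow, abs_neg, abs_of_pos ha0]
        linarith
      have b2 := Real.abs_sin_le_one ((k + 1) * θ)
      have b3 : (1:ℝ) ≤ |(k:ℝ) + 1| := by
        rw [abs_of_pos (by positivity)]
        linarith [Nat.cast_nonneg (α := ℝ) k]
      refine (div_le_self (by positivity) b3).trans ?_
      exact (mul_le_of_le_one_right (abs_nonneg _) b2).trans b1)
    (Filter.Eventually.of_forall (fun θ _ => hg.mul_left 2))
    (by simp)
    (Filter.Eventually.of_forall (fun θ _ => mw_series a θ ha0 ha1 ha))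
  simp only [mw_coef] at H
  rw [← H.tsum_eq, Li2, Li2]
  exact (hs a (abs_of_pos ha0)).tsum_sub (hs (-a) (by rw [abs_neg, abs_of_pos ha0]))

/-- mean-width identity (direct approach) for the convex hull of two
orthogonal unit disks through a common center. -/
theorem mean_width_example_one_direct :
    (8 / Real.pi) * (∫ θ in (0 : ℝ)..(Real.pi / 2),
        ∫ φ in (Real.arccos (Real.sin θ / Real.sqrt (2 - Real.cos θ ^ 2)))..(Real.pi / 2),
          Real.sin φ ^ 2) =
    -(1 / Real.pi) * (2 * Real.sqrt 2 * Real.log (-1 + Real.sqrt 2)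
      - 4 * Li2 (-1 + Real.sqrt 2) + 4 * Li2 (1 - Real.sqrt 2)) := by
  have h2 : √2 ^ 2 = (2:ℝ) := Real.sq_sqrt (by norm_num)
  have h1 : 1 < √2 := by
    rw [Real.lt_sqrt (by norm_num)]; norm_num
  simp only [mw_inner]
  rw [intervalIntegral.integral_const_mul, intervalIntegral.integral_add, mw_second,
    mw_first (-1 + √2) (by linarith) (by nlinarith) (by nlinarith)]
  · have e : -(-1 + √2) = 1 - √2 := by ring
    have e2 : 1 / √2 = √2 / 2 := by
      field_simp
      linarith
    rw [e, e2]
    ring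
  · apply Continuous.intervalIntegrable
    exact Real.continuous_arctan.comp Real.continuous_sin
  · apply Continuous.intervalIntegrable
    refine Real.continuous_sin.div (by fun_prop) (fun x => by positivity)
end

section
/- The Lebesgue volume of the convex hull in ℝ³ of the union of the two unit disks D₁ = {(x,y,−1) : x² + y² ≤ 1} and D₂ = {(x,1,z) : x² + z² ≤ 1} equals π. -/
open Real MeasureTheory

lemma hullEq_aux : convexHull ℝ
      ({p : EuclideanSpace ℝ (Fin 3) | (p 0) ^ 2 + (p 1) ^ 2 ≤ 1 ∧ p 2 = -1} ∪
       {p : EuclideanSpace ℝ (Fin 3) | (p 0) ^ 2 + (p 2) ^ 2 ≤ 1 ∧ p 1 = 1}) =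
    {p : EuclideanSpace ℝ (Fin 3) | (p 0)^2 + (1 - p 1 + p 2)^2 ≤ 1 ∧ p 1 ≤ 1 ∧ -1 ≤ p 2} := by
  apply Set.Subset.antisymm
  · apply convexHull_min
    · rintro p (⟨h1, h2⟩ | ⟨h1, h2⟩)
      · refine ⟨?_, ?_, ?_⟩
        · rw [h2]; nlinarith
        · nlinarith [sq_nonneg (p 0)]
        · rw [h2]
      · refine ⟨?_, ?_, ?_⟩
        · rw [h2]; nlinarith
        · rw [h2]
        · nlinarith [sq_nonneg (p 0)]
    · rintro p ⟨p1, p2, p3⟩ q ⟨q1, q2, q3⟩ a b ha hb hab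
      refine ⟨?_, ?_, ?_⟩
      · simp only [PiLp.add_apply, PiLp.smul_apply, smul_eq_mul]
        have hb' : b = 1 - a := by linarith
        generalize hs : 1 - p 1 + p 2 = s at p1
        generalize ht : 1 - q 1 + q 2 = t at q1
        have e : 1 - (a * p 1 + b * q 1) + (a * p 2 + b * q 2) = a * s + b * t := by
          rw [← hs, ← ht, hb']; ring
        rw [e]
        have h2 : p 0 * q 0 + s * t ≤ 1 := by nlinarith [sq_nonneg (p 0 - q 0), sq_nonneg (s - t)]
        have e2 : (a * p 0 + b * q 0)^2 + (a * s + b * t)^2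
          = a^2 * (p 0 ^2 + s^2) + b^2 * (q 0 ^ 2 + t^2) + 2*(a*b)*(p 0 * q 0 + s * t) := by ring
        have e3 : (1:ℝ) = a^2 * 1 + b^2*1 + 2*(a*b)*1 := by rw [hb']; ring
        rw [e2, e3]
        gcongr
      · simp only [PiLp.add_apply, PiLp.smul_apply, smul_eq_mul]
        nlinarith
      · simp only [PiLp.add_apply, PiLp.smul_apply, smul_eq_mul]
        nlinarith
  · rintro p ⟨h1, h2, h3⟩
    rcases eq_or_lt_of_le (show 0 ≤ 2 - p 1 + p 2 by linarith) with h | h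
    · apply subset_convexHull
      left
      have hz : p 2 = -1 := by linarith
      have hy : p 1 = 1 := by linarith
      refine ⟨?_, hz⟩
      rw [hz, hy] at h1
      rw [hy]; linarith
    · have hA : (!₂[p 0, p 1 - p 2 - 1, -1] : EuclideanSpace ℝ (Fin 3)) ∈ convexHull ℝ
          ({p : EuclideanSpace ℝ (Fin 3) | (p 0) ^ 2 + (p 1) ^ 2 ≤ 1 ∧ p 2 = -1} ∪
       {p : EuclideanSpace ℝ (Fin 3) | (p 0) ^ 2 + (p 2) ^ 2 ≤ 1 ∧ p 1 = 1}) := by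
        apply subset_convexHull
        left
        simp
        nlinarith
      have hB : (!₂[p 0, 1, 1 - p 1 + p 2] : EuclideanSpace ℝ (Fin 3)) ∈ convexHull ℝ
          ({p : EuclideanSpace ℝ (Fin 3) | (p 0) ^ 2 + (p 1) ^ 2 ≤ 1 ∧ p 2 = -1} ∪
       {p : EuclideanSpace ℝ (Fin 3) | (p 0) ^ 2 + (p 2) ^ 2 ≤ 1 ∧ p 1 = 1}) := by
        apply subset_convexHull
        right
        simp
        nlinarith
      have := (convex_convexHull ℝ _) hA hB (a := (1 - p 1)/(2 - p 1 + p 2))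
        (b := (p 2 + 1)/(2 - p 1 + p 2)) (div_nonneg (by linarith) h.le)
        (div_nonneg (by linarith) h.le) (by field_simp; ring)
      convert this using 1
      ext i
      fin_cases i
      · simp; field_simp; ring
      · simp; field_simp; ring
      · simp; field_simp; ring

lemma disk_aux : volume {q : ℝ × ℝ | q.1^2 + q.2^2 ≤ 1} = ENNReal.ofReal π := by
  have h := Complex.volume_preserving_equiv_real_prod.measure_preimage_equiv
    {q : ℝ × ℝ | q.1^2 + q.2^2 ≤ 1}
  rw [← h]
  have : (Complex.measurableEquivRealProd ⁻¹' {q : ℝ × ℝ | q.1^2 + q.2^2 ≤ 1})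
      = Metric.closedBall (0:ℂ) 1 := by
    ext z
    simp only [Set.mem_preimage, Set.mem_setOf_eq, Complex.measurableEquivRealProd_apply,
      mem_closedBall_zero_iff]
    rw [← sq_le_one_iff₀ (norm_nonneg z), Complex.sq_norm, Complex.normSq_apply]
    ring_nf
  rw [this, Complex.volume_closedBall]
  simp [ENNReal.ofReal, Real.toNNReal_of_nonneg pi_pos.le]
  rfl

lemma measAnd_aux {α : Type*} [MeasurableSpace α] {p q : α → Prop}
    (hp : MeasurableSet {a | p a}) (hq : MeasurableSet {a | q a}) :
    MeasurableSet {a | p a ∧ q a} := hp.inter hq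

lemma measDisk_aux : MeasurableSet {q : ℝ × ℝ | q.1^2 + q.2^2 ≤ 1} :=
  measurableSet_le (by fun_prop) (by fun_prop)

lemma integral_aux : ∫⁻ q in {q : ℝ × ℝ | q.1^2 + q.2^2 ≤ 1}, ENNReal.ofReal (q.2 + 1)
    = ENNReal.ofReal π := by
  set D := {q : ℝ × ℝ | q.1^2 + q.2^2 ≤ 1} with hD
  have mp : MeasurePreserving (Prod.map id Neg.neg : ℝ × ℝ → ℝ × ℝ) volume volume :=
    (MeasurePreserving.id volume).prod (Measure.measurePreserving_neg volume)
  have pre : (Prod.map id Neg.neg : ℝ × ℝ → ℝ × ℝ) ⁻¹' D = D := by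
    ext q; simp [hD]
  have h1 := mp.setLIntegral_comp_preimage (s := D) measDisk_aux
    (f := fun q => ENNReal.ofReal (q.2 + 1)) (by fun_prop)
  rw [pre] at h1
  have h2 : (∫⁻ q in D, ENNReal.ofReal (q.2 + 1)) +
      ∫⁻ q in D, ENNReal.ofReal ((Prod.map id Neg.neg q : ℝ × ℝ).2 + 1) = 2 * volume D := by
    rw [← lintegral_add_left (by fun_prop), ← setLIntegral_const]
    apply setLIntegral_congr_fun measDisk_aux
    intro q hq
    have hq' : q.1^2 + q.2^2 ≤ 1 := hq
    have : |q.2| ≤ 1 := by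
      rw [← sq_le_one_iff_abs_le_one]; nlinarith [sq_nonneg q.1]
    rw [abs_le] at this
    simp only [Prod.map_snd]
    rw [← ENNReal.ofReal_add (by linarith) (by linarith)]
    ring_nf
    simp
  rw [h1, ← two_mul] at h2
  rw [← disk_aux]
  exact (ENNReal.mul_right_inj (by simp) (by simp)).1 h2

lemma slice_aux (x : ℝ) :
    volume {q : ℝ × ℝ | x^2 + (1 - q.1 + q.2)^2 ≤ 1 ∧ q.1 ≤ 1 ∧ -1 ≤ q.2} =
    ∫⁻ s, Set.indicator {q : ℝ × ℝ | q.1^2 + q.2^2 ≤ 1}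
      (fun q => ENNReal.ofReal (q.2 + 1)) (x, s) := by
  have m1 : MeasurableSet {q : ℝ × ℝ | x^2 + (1 - q.1 + q.2)^2 ≤ 1 ∧ q.1 ≤ 1 ∧ -1 ≤ q.2} :=
    measAnd_aux (measurableSet_le (by fun_prop) (by fun_prop))
      (measAnd_aux (measurableSet_le (by fun_prop) (by fun_prop))
        (measurableSet_le (by fun_prop) (by fun_prop)))
  have m2 : MeasurableSet {q : ℝ × ℝ | x^2 + q.1^2 ≤ 1 ∧ q.2 ≤ q.1 ∧ -1 ≤ q.2} :=
    measAnd_aux (measurableSet_le (by fun_prop) (by fun_prop))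
      (measAnd_aux (measurableSet_le (by fun_prop) (by fun_prop))
        (measurableSet_le (by fun_prop) (by fun_prop)))
  have e : volume {q : ℝ × ℝ | x^2 + (1 - q.1 + q.2)^2 ≤ 1 ∧ q.1 ≤ 1 ∧ -1 ≤ q.2} =
      volume {q : ℝ × ℝ | x^2 + q.1^2 ≤ 1 ∧ q.2 ≤ q.1 ∧ -1 ≤ q.2} := by
    rw [Measure.volume_eq_prod, Measure.prod_apply_symm m1, Measure.prod_apply_symm m2]
    congr 1
    ext z
    have m3 : MeasurableSet ((fun s : ℝ => (s, z)) ⁻¹'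
      {q : ℝ × ℝ | x^2 + q.1^2 ≤ 1 ∧ q.2 ≤ q.1 ∧ -1 ≤ q.2}) := m2.preimage (by fun_prop)
    rw [← (Measure.measurePreserving_sub_left volume (1 + z)).measure_preimage m3.nullMeasurableSet]
    congr 1
    ext y
    simp only [Set.mem_preimage, Set.mem_setOf_eq]
    rw [show 1 + z - y = 1 - y + z by ring]
    constructor <;> rintro ⟨a, b, c⟩ <;> exact ⟨a, by linarith, c⟩
  rw [e, Measure.volume_eq_prod, Measure.prod_apply m2]
  congr 1
  ext s
  by_cases h : x^2 + s^2 ≤ 1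
  · rw [Set.indicator_of_mem (by exact h)]
    have : (Prod.mk s ⁻¹' {q : ℝ × ℝ | x^2 + q.1^2 ≤ 1 ∧ q.2 ≤ q.1 ∧ -1 ≤ q.2})
        = Set.Icc (-1) s := by
      ext z; simp [h, and_comm]
    rw [this, Real.volume_Icc]; simp
  · rw [Set.indicator_of_notMem (by exact h)]
    have : (Prod.mk s ⁻¹' {q : ℝ × ℝ | x^2 + q.1^2 ≤ 1 ∧ q.2 ≤ q.1 ∧ -1 ≤ q.2})
        = ∅ := by
      ext z; simp [h]
    rw [this]; simp

lemma prodVol_aux : volume {q : ℝ × ℝ × ℝ | q.1^2 + (1 - q.2.1 + q.2.2)^2 ≤ 1 ∧ q.2.1 ≤ 1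
    ∧ -1 ≤ q.2.2} = ENNReal.ofReal π := by
  have m1 : MeasurableSet {q : ℝ × ℝ × ℝ | q.1^2 + (1 - q.2.1 + q.2.2)^2 ≤ 1 ∧ q.2.1 ≤ 1
    ∧ -1 ≤ q.2.2} :=
    measAnd_aux (measurableSet_le (by fun_prop) (by fun_prop))
      (measAnd_aux (measurableSet_le (by fun_prop) (by fun_prop))
        (measurableSet_le (by fun_prop) (by fun_prop)))
  rw [Measure.volume_eq_prod, Measure.prod_apply m1, ← integral_aux,
    ← lintegral_indicator measDisk_aux, Measure.volume_eq_prod ℝ ℝ, lintegral_prod]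
  · congr 1
    ext x
    exact slice_aux x
  · exact (Measurable.indicator (by fun_prop) measDisk_aux).aemeasurable

/-- The Lebesgue volume of the convex hull in ℝ³ of the union of the two
unit disks D₁ = {(x,y,−1) : x² + y² ≤ 1} and D₂ = {(x,1,z) : x² + z² ≤ 1} equals π. -/
theorem volume_convexHull_example_two :
    volume (convexHull ℝ
      ({p : EuclideanSpace ℝ (Fin 3) | (p 0) ^ 2 + (p 1) ^ 2 ≤ 1 ∧ p 2 = -1} ∪
       {p : EuclideanSpace ℝ (Fin 3) | (p 0) ^ 2 + (p 2) ^ 2 ≤ 1 ∧ p 1 = 1})) =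
    ENNReal.ofReal Real.pi := by
  rw [hullEq_aux, ← prodVol_aux]
  have a1 := EuclideanSpace.volume_preserving_symm_measurableEquiv_toLp (Fin 3)
  have a2 := volume_preserving_piFinSuccAbove (fun _ : Fin 3 => ℝ) 0
  have a3 := (MeasurePreserving.id (volume : Measure ℝ)).prod
    (volume_preserving_finTwoArrow ℝ)
  have m1 : MeasurableSet {q : ℝ × ℝ × ℝ | q.1^2 + (1 - q.2.1 + q.2.2)^2 ≤ 1 ∧ q.2.1 ≤ 1
    ∧ -1 ≤ q.2.2} :=
    measAnd_aux (measurableSet_le (by fun_prop) (by fun_prop))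
      (measAnd_aux (measurableSet_le (by fun_prop) (by fun_prop))
        (measurableSet_le (by fun_prop) (by fun_prop)))
  have a4 := a3.comp (a2.comp a1)
  exact a4.measure_preimage m1.nullMeasurableSet
end

section
/- The convex hull in ℝ³ of the union of the two unit disks D₁ = {(x,y,−1) : x² + y² ≤ 1} and D₂ = {(x,1,z) : x² + z² ≤ 1} equals the set {(x,y,z) : x² ≤ 1, −1 ≤ z, y ≤ 1, −√(1 − x²) + y − 1 ≤ z ≤ √(1 − x²) + y − 1}. -/
open Real

lemma aux_mem (x y z : ℝ) :
    (x ^ 2 ≤ 1 ∧ -1 ≤ z ∧ y ≤ 1 ∧ -Real.sqrt (1 - x ^ 2) + y - 1 ≤ z ∧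
      z ≤ Real.sqrt (1 - x ^ 2) + y - 1) ↔
    (-1 ≤ z ∧ y ≤ 1 ∧ x ^ 2 + (z - y + 1) ^ 2 ≤ 1) := by
  constructor
  · rintro ⟨h1, h2, h3, h4, h5⟩
    refine ⟨h2, h3, ?_⟩
    have hs := Real.sq_sqrt (show 0 ≤ 1 - x ^ 2 by linarith)
    have := sq_le_sq' (show -Real.sqrt (1 - x ^ 2) ≤ z - y + 1 by linarith) (by linarith)
    linarith
  · rintro ⟨h2, h3, h⟩
    have := abs_le.1 (Real.abs_le_sqrt (show (z - y + 1) ^ 2 ≤ 1 - x ^ 2 by linarith))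
    exact ⟨by nlinarith [sq_nonneg (z - y + 1)], h2, h3, by linarith [this.1], by linarith [this.2]⟩

lemma aux_sq (a b x y : ℝ) (ha : 0 ≤ a) (hb : 0 ≤ b) (hab : a + b = 1) :
    (a * x + b * y) ^ 2 ≤ a * x ^ 2 + b * y ^ 2 := by
  obtain rfl : b = 1 - a := by linarith
  nlinarith [mul_nonneg (mul_nonneg ha hb) (sq_nonneg (x - y))]

/-- The convex hull in ℝ³ of the union of the two unit disks
D₁ = {(x,y,−1) : x² + y² ≤ 1} and D₂ = {(x,1,z) : x² + z² ≤ 1} equals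
{(x,y,z) : x² ≤ 1, −1 ≤ z, y ≤ 1, −√(1 − x²) + y − 1 ≤ z ≤ √(1 − x²) + y − 1}. -/
theorem convexHull_example_two_eq :
    convexHull ℝ
      ({p : EuclideanSpace ℝ (Fin 3) | (p 0) ^ 2 + (p 1) ^ 2 ≤ 1 ∧ p 2 = -1} ∪
       {p : EuclideanSpace ℝ (Fin 3) | (p 0) ^ 2 + (p 2) ^ 2 ≤ 1 ∧ p 1 = 1}) =
    {p : EuclideanSpace ℝ (Fin 3) |
      (p 0) ^ 2 ≤ 1 ∧ -1 ≤ p 2 ∧ p 1 ≤ 1 ∧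
      -Real.sqrt (1 - (p 0) ^ 2) + p 1 - 1 ≤ p 2 ∧
      p 2 ≤ Real.sqrt (1 - (p 0) ^ 2) + p 1 - 1} := by
  simp only [aux_mem]
  apply Set.Subset.antisymm
  · apply convexHull_min
    · rintro p (⟨h1, h2⟩ | ⟨h1, h2⟩)
      · refine ⟨h2.ge, by nlinarith [sq_nonneg (p 0)], ?_⟩
        rw [h2]; nlinarith
      · refine ⟨by nlinarith [sq_nonneg (p 0)], h2.le, ?_⟩
        rw [h2]; nlinarith
    · rintro p ⟨p1, p2, p3⟩ q ⟨q1, q2, q3⟩ a b ha hb hab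
      simp only [Set.mem_setOf_eq, PiLp.add_apply, PiLp.smul_apply, smul_eq_mul]
      have e1 := aux_sq a b (p 0) (q 0) ha hb hab
      have e2 := aux_sq a b (p 2 - p 1 + 1) (q 2 - q 1 + 1) ha hb hab
      have e3 : a * p 2 + b * q 2 - (a * p 1 + b * q 1) + 1
          = a * (p 2 - p 1 + 1) + b * (q 2 - q 1 + 1) := by linear_combination -hab
      refine ⟨by nlinarith, by nlinarith, ?_⟩
      rw [e3]
      nlinarith [mul_le_mul_of_nonneg_left p3 ha, mul_le_mul_of_nonneg_left q3 hb]
  · rintro p ⟨h1, h2, h3⟩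
    by_cases hw : p 2 - p 1 + 2 = 0
    · apply subset_convexHull
      left
      have e1 : p 2 = -1 := by linarith
      have e2 : p 1 = 1 := by linarith
      rw [e1, e2] at h3
      refine ⟨?_, e1⟩
      rw [e2]; linarith
    · have hpos : 0 < p 2 - p 1 + 2 := lt_of_le_of_ne (by linarith) (Ne.symm hw)
      have hc := convex_convexHull ℝ
        ({p : EuclideanSpace ℝ (Fin 3) | (p 0) ^ 2 + (p 1) ^ 2 ≤ 1 ∧ p 2 = -1} ∪
         {p : EuclideanSpace ℝ (Fin 3) | (p 0) ^ 2 + (p 2) ^ 2 ≤ 1 ∧ p 1 = 1})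
      have m1 := subset_convexHull ℝ _ (Set.mem_union_left
         {p : EuclideanSpace ℝ (Fin 3) | (p 0) ^ 2 + (p 2) ^ 2 ≤ 1 ∧ p 1 = 1}
        (show !₂[p 0, -(p 2 - p 1 + 1), -1] ∈
          {p : EuclideanSpace ℝ (Fin 3) | (p 0) ^ 2 + (p 1) ^ 2 ≤ 1 ∧ p 2 = -1} by
            simp; nlinarith))
      have m2 := subset_convexHull ℝ _ (Set.mem_union_right
         {p : EuclideanSpace ℝ (Fin 3) | (p 0) ^ 2 + (p 1) ^ 2 ≤ 1 ∧ p 2 = -1}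
        (show !₂[p 0, 1, p 2 - p 1 + 1] ∈
          {p : EuclideanSpace ℝ (Fin 3) | (p 0) ^ 2 + (p 2) ^ 2 ≤ 1 ∧ p 1 = 1} by
            simp; nlinarith))
      have := hc m1 m2 (a := (1 - p 1) / (p 2 - p 1 + 2)) (b := (p 2 + 1) / (p 2 - p 1 + 2))
        (div_nonneg (by linarith) hpos.le) (div_nonneg (by linarith) hpos.le)
        (by field_simp; ring)
      convert this using 1
      ext i
      fin_cases i <;> simp <;> field_simp <;> ring
end

section
/- One has ∫_{v=-1}^{1} √( (1 − v)(1 + v²)/(1 + v) ) dv = 2√2 · E(1/2), where E(μ) = ∫₀^{π/2} √(1 − μ sin²θ) dθ is the complete elliptic integral of the second kind. -/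
open Real

/-- The complete elliptic integral of the second kind E(μ) = ∫₀^{π/2} √(1 − μ sin²θ) dθ. -/
noncomputable def ellipticE (μ : ℝ) : ℝ :=
  ∫ θ in (0 : ℝ)..(Real.pi / 2), Real.sqrt (1 - μ * Real.sin θ ^ 2)

/-- ∫_{v=-1}^{1} √((1 − v)(1 + v²)/(1 + v)) dv = 2√2 · E(1/2). -/
theorem surface_area_element_integral_example_two :
    (∫ v in (-1 : ℝ)..1, Real.sqrt ((1 - v) * (1 + v ^ 2) / (1 + v))) =
      2 * Real.sqrt 2 * ellipticE (1 / 2) := by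
  have h1 : (∫ v in (-1 : ℝ)..1, Real.sqrt ((1 - v) * (1 + v ^ 2) / (1 + v))) =
      ∫ t in (0:ℝ)..π, (1 - cos t) * √(1 + cos t ^ 2) := by
    rw [intervalIntegral.integral_of_le (by norm_num),
      intervalIntegral.integral_of_le pi_pos.le,
      ← MeasureTheory.integral_Icc_eq_integral_Ioc, ← Real.bijOn_cos.image_eq,
      MeasureTheory.integral_image_eq_integral_abs_deriv_smul measurableSet_Icc
        (fun x _ => (Real.hasDerivAt_cos x).hasDerivWithinAt) Real.injOn_cos,
      MeasureTheory.integral_Icc_eq_integral_Ioo, MeasureTheory.integral_Ioc_eq_integral_Ioo]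
    refine MeasureTheory.setIntegral_congr_fun measurableSet_Ioo ?_
    intro t ht
    have hs : 0 < sin t := sin_pos_of_pos_of_lt_pi ht.1 ht.2
    have hsc := sin_sq_add_cos_sq t
    have hc1 : 0 < 1 + cos t := by nlinarith [neg_one_le_cos t, cos_le_one t]
    have hc2 : 0 ≤ 1 - cos t := by linarith [cos_le_one t]
    have e : (1 - cos t) * (1 + cos t ^ 2) / (1 + cos t)
        = ((1 - cos t) / sin t) ^ 2 * (1 + cos t ^ 2) := by
      have : sin t ^ 2 = (1 - cos t) * (1 + cos t) := by linarith
      rw [div_pow, this]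
      have : 1 - cos t ≠ 0 := by
        intro h
        rw [h] at this
        nlinarith
      field_simp
    simp only [abs_neg, abs_of_pos hs, smul_eq_mul]
    rw [e, sqrt_mul (sq_nonneg _), sqrt_sq (by positivity)]
    field_simp
  have hc : Continuous fun t : ℝ => (1 - cos t) * √(1 + cos t ^ 2) := by fun_prop
  have h2 : (∫ t in (π/2)..π, (1 - cos t) * √(1 + cos t ^ 2)) =
      ∫ t in (0:ℝ)..(π/2), (1 + cos t) * √(1 + cos t ^ 2) := by
    have := intervalIntegral.integral_comp_sub_left (a := 0) (b := π/2)
      (fun t : ℝ => (1 - cos t) * √(1 + cos t ^ 2)) π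
    rw [show π - π/2 = π/2 by ring, sub_zero] at this
    rw [← this]
    simp [cos_pi_sub]
  rw [h1, ← intervalIntegral.integral_add_adjacent_intervals (b := π/2)
    (hc.intervalIntegrable _ _) (hc.intervalIntegrable _ _), h2,
    ← intervalIntegral.integral_add (hc.intervalIntegrable _ _)
      (Continuous.intervalIntegrable (by fun_prop) _ _), ellipticE,
    ← intervalIntegral.integral_const_mul]
  congr 1
  ext t
  have : 1 + cos t ^ 2 = 2 * (1 - 1 / 2 * sin t ^ 2) := by
    linarith [sin_sq_add_cos_sq t]
  rw [this, sqrt_mul (by norm_num)]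
  ring
end

section
/- One has ∫_{v=-1}^{1} (1/√(1 − v²)) · arccos( v / √(1 + v²) ) dv = π² / 2. -/
open Real

/-- ∫_{v=-1}^{1} (1/√(1 − v²)) · arccos( v / √(1 + v²) ) dv = π²/2. -/
theorem dihedral_angle_integral_example_two_parametrized :
    (∫ v in (-1 : ℝ)..1,
        (1 / Real.sqrt (1 - v ^ 2)) * Real.arccos (v / Real.sqrt (1 + v ^ 2))) =
      Real.pi ^ 2 / 2 := by
  have hd : ∀ x ∈ Set.Ioo (-1 : ℝ) 1, HasDerivAt arcsin (1 / √(1 - x ^ 2)) x := fun x hx =>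
    hasDerivAt_arcsin hx.1.ne' hx.2.ne
  have hw : IntervalIntegrable (fun v : ℝ => 1 / √(1 - v ^ 2)) MeasureTheory.volume (-1) 1 := by
    apply intervalIntegral.intervalIntegrable_deriv_of_nonneg (g := arcsin)
    · exact continuous_arcsin.continuousOn
    · intro x hx
      apply hd
      simpa using hx
    · intro x _
      positivity
  have hwi : ∫ v in (-1 : ℝ)..1, 1 / √(1 - v ^ 2) = π := by
    rw [intervalIntegral.integral_eq_sub_of_hasDerivAt_of_le (by norm_num)
      continuous_arcsin.continuousOn hd hw]
    simp
  have hc : Continuous fun v : ℝ => arccos (v / √(1 + v ^ 2)) := by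
    apply continuous_arccos.comp
    apply Continuous.div (by fun_prop) (by fun_prop)
    intro x
    positivity
  have hf := hw.mul_continuousOn hc.continuousOn
  have h1 := intervalIntegral.integral_comp_neg (a := -1) (b := 1) (fun v : ℝ =>
    (1 / √(1 - v ^ 2)) * arccos (v / √(1 + v ^ 2)))
  have h2 : ∀ v : ℝ, (1 / √(1 - (-v) ^ 2)) * arccos (-v / √(1 + (-v) ^ 2)) =
      π * (1 / √(1 - v ^ 2)) - (1 / √(1 - v ^ 2)) * arccos (v / √(1 + v ^ 2)) := by
    intro v
    rw [neg_sq, neg_div, arccos_neg]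
    ring
  simp only [h2, neg_neg] at h1
  rw [intervalIntegral.integral_sub (hw.const_mul π) hf, intervalIntegral.integral_const_mul,
    hwi] at h1
  linarith
end

section
/- One has ∫_{θ=-π/2}^{π/2} ∫_{φ=0}^{π} max{ sin φ − cos φ, √(cos²θ sin²φ + cos²φ) + sin θ sin φ } · sin φ dφ dθ = π(√2 + π)/2. -/
open Real

lemma mw_K (k : ℝ) (hk : 0 < k) :
    ∫ θ in (-(π / 2))..(π / 2), 1 / (cos θ ^ 2 + k ^ 2 * sin θ ^ 2) = π / k := by
  have hden : ∀ θ : ℝ, 0 < cos θ ^ 2 + k * sin θ ^ 2 := by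
    intro θ
    have h := sin_sq_add_cos_sq θ
    rcases eq_or_ne (sin θ) 0 with h0 | h0
    · rw [h0] at h ⊢; nlinarith
    · have := mul_pos hk (pow_pos (abs_pos.2 h0) 2)
      rw [sq_abs] at this
      positivity
  have hden2 : ∀ θ : ℝ, 0 < cos θ ^ 2 + k ^ 2 * sin θ ^ 2 := by
    intro θ
    have h := sin_sq_add_cos_sq θ
    rcases eq_or_ne (sin θ) 0 with h0 | h0
    · rw [h0] at h ⊢; nlinarith
    · positivity
  have hd : ∀ θ ∈ Set.uIcc (-(π / 2)) (π / 2), HasDerivAt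
      (fun θ => (θ + arctan ((k - 1) * (sin θ * cos θ) / (cos θ ^ 2 + k * sin θ ^ 2))) / k)
      (1 / (cos θ ^ 2 + k ^ 2 * sin θ ^ 2)) θ := by
    intro θ _
    have h1 := (((hasDerivAt_sin θ).mul (hasDerivAt_cos θ)).const_mul (k - 1)).div
      (((hasDerivAt_cos θ).pow 2).add (((hasDerivAt_sin θ).pow 2).const_mul k)) (hden θ).ne'
    have h2 := ((hasDerivAt_id θ).add h1.arctan).div_const k
    refine h2.congr_deriv ?_
    have e1 := (hden θ).ne'
    have e2 := (hden2 θ).ne'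
    have hs : cos θ ^ 2 = 1 - sin θ ^ 2 := by rw [← sin_sq_add_cos_sq θ]; ring
    have e3 : (cos θ ^ 2 + k * sin θ ^ 2) ^ 2 + ((k - 1) * (sin θ * cos θ)) ^ 2
        = cos θ ^ 2 + k ^ 2 * sin θ ^ 2 := by
      simp only [mul_pow]; rw [hs]; ring
    have e4 : 1 + ((k - 1) * (sin θ * cos θ) / (cos θ ^ 2 + k * sin θ ^ 2)) ^ 2
        = (cos θ ^ 2 + k ^ 2 * sin θ ^ 2) / (cos θ ^ 2 + k * sin θ ^ 2) ^ 2 := by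
      rw [← e3]; field_simp
    simp only [Pi.mul_apply, Pi.add_apply, Pi.pow_apply, Pi.div_apply]
    rw [e4]
    field_simp
    simp
    have h4 : cos θ ^ 4 = (1 - sin θ ^ 2) ^ 2 := by rw [← hs]; ring
    ring_nf
    simp only [h4, hs]
    ring
  have hc : Continuous fun θ : ℝ => 1 / (cos θ ^ 2 + k ^ 2 * sin θ ^ 2) :=
    continuous_const.div (by fun_prop) (fun θ => (hden2 θ).ne')
  rw [intervalIntegral.integral_eq_sub_of_hasDerivAt hd (hc.intervalIntegrable _ _)]
  simp
  ring

lemma mw_L1 : ∫ θ in (-(π / 2))..(π / 2), (1 + sin θ * arctan (sin θ)) = √2 * π := by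
  have hK := mw_K (√2) (by positivity)
  have hp : ∀ θ : ℝ, 0 < 1 + sin θ ^ 2 := fun θ => by positivity
  have hd : ∀ θ ∈ Set.uIcc (-(π / 2)) (π / 2), HasDerivAt
      (fun θ => - cos θ * arctan (sin θ))
      (1 + sin θ * arctan (sin θ) - 2 * (1 / (cos θ ^ 2 + √2 ^ 2 * sin θ ^ 2))) θ := by
    intro θ _
    have h1 := (hasDerivAt_cos θ).neg.mul (hasDerivAt_sin θ).arctan
    refine h1.congr_deriv ?_
    have hs : cos θ ^ 2 = 1 - sin θ ^ 2 := by rw [← sin_sq_add_cos_sq θ]; ring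
    have e : cos θ ^ 2 + √2 ^ 2 * sin θ ^ 2 = 1 + sin θ ^ 2 := by
      rw [hs, sq_sqrt (by norm_num)]; ring
    rw [e]
    have := (hp θ).ne'
    simp only [Pi.neg_apply]
    field_simp
    rw [hs]; ring
  have hc1 : Continuous fun θ : ℝ => 1 + sin θ * arctan (sin θ) := by
    have := continuous_arctan; fun_prop
  have hc2 : Continuous fun θ : ℝ => 2 * (1 / (cos θ ^ 2 + √2 ^ 2 * sin θ ^ 2)) := by
    refine continuous_const.mul (continuous_const.div (by fun_prop) (fun θ => ?_))
    have hs := sin_sq_add_cos_sq θ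
    rw [sq_sqrt (by norm_num)]
    nlinarith [sq_nonneg (sin θ)]
  have := intervalIntegral.integral_eq_sub_of_hasDerivAt hd ((hc1.sub hc2).intervalIntegrable _ _)
  rw [intervalIntegral.integral_sub (hc1.intervalIntegrable _ _) (hc2.intervalIntegrable _ _),
    intervalIntegral.integral_const_mul, hK] at this
  simp only [cos_neg, cos_pi_div_two, neg_zero, zero_mul, sub_zero] at this
  rw [sub_eq_zero.1 this]
  have h2 : √2 * √2 = 2 := mul_self_sqrt (by norm_num)
  field_simp
  nlinarith

lemma mw_inner_s11 (s : ℝ) : ∫ φ in (0 : ℝ)..π, sin φ * |s * sin φ + cos φ| = 1 + s * arctan s := by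
  have hc : Continuous fun φ : ℝ => sin φ * |s * sin φ + cos φ| := by fun_prop
  set p := π / 2 + arctan s with hp
  have l1 := neg_pi_div_two_lt_arctan s
  have l2 := arctan_lt_pi_div_two s
  have key : ∀ φ, s * sin φ + cos φ = √(1 + s ^ 2) * sin (p - φ) := by
    intro φ
    have h0 : 0 < √(1 + s ^ 2) := sqrt_pos.2 (by positivity)
    have : p - φ = π / 2 - (φ - arctan s) := by rw [hp]; ring
    rw [this, sin_pi_div_two_sub, cos_sub, cos_arctan, sin_arctan]
    field_simp
    ring
  have hd : ∀ φ, HasDerivAt (fun φ => s * (φ - sin φ * cos φ) / 2 + sin φ ^ 2 / 2)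
      (sin φ * (s * sin φ + cos φ)) φ := by
    intro φ
    have h1 := ((((hasDerivAt_id φ).sub ((hasDerivAt_sin φ).mul (hasDerivAt_cos φ))).const_mul
      s).div_const 2).add (((hasDerivAt_sin φ).pow 2).div_const 2)
    refine h1.congr_deriv ?_
    have hs : cos φ ^ 2 = 1 - sin φ ^ 2 := by rw [← sin_sq_add_cos_sq φ]; ring
    simp
    ring_nf
    rw [hs]; ring
  have hc' : Continuous fun φ : ℝ => sin φ * (s * sin φ + cos φ) := by fun_prop
  rw [← intervalIntegral.integral_add_adjacent_intervals (b := p) (hc.intervalIntegrable _ _)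
    (hc.intervalIntegrable _ _)]
  have i1 : ∫ φ in (0 : ℝ)..p, sin φ * |s * sin φ + cos φ|
      = ∫ φ in (0 : ℝ)..p, sin φ * (s * sin φ + cos φ) := by
    refine intervalIntegral.integral_congr fun φ hφ => ?_
    rw [Set.uIcc_of_le (by linarith)] at hφ
    have : 0 ≤ s * sin φ + cos φ := by
      rw [key]
      exact mul_nonneg (sqrt_nonneg _) (sin_nonneg_of_nonneg_of_le_pi (by linarith [hφ.2])
        (by linarith [hφ.1]))
    simp only [abs_of_nonneg this]
  have i2 : ∫ φ in p..π, sin φ * |s * sin φ + cos φ|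
      = ∫ φ in p..π, - (sin φ * (s * sin φ + cos φ)) := by
    refine intervalIntegral.integral_congr fun φ hφ => ?_
    rw [Set.uIcc_of_le (by linarith)] at hφ
    have : s * sin φ + cos φ ≤ 0 := by
      rw [key]
      exact mul_nonpos_of_nonneg_of_nonpos (sqrt_nonneg _)
        (sin_nonpos_of_nonpos_of_neg_pi_le (by linarith [hφ.1]) (by linarith [hφ.2]))
    simp only [abs_of_nonpos this]; ring
  rw [i1, i2, intervalIntegral.integral_neg,
    intervalIntegral.integral_eq_sub_of_hasDerivAt (fun φ _ => hd φ) (hc'.intervalIntegrable _ _),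
    intervalIntegral.integral_eq_sub_of_hasDerivAt (fun φ _ => hd φ) (hc'.intervalIntegrable _ _)]
  have e1 : sin p = cos (arctan s) := by rw [hp, add_comm, sin_add_pi_div_two]
  have e2 : cos p = - sin (arctan s) := by rw [hp, add_comm, cos_add_pi_div_two]
  have e3 : sin (arctan s) = s * cos (arctan s) := by
    rw [sin_arctan, cos_arctan]; ring
  have e4 : cos (arctan s) ^ 2 * (1 + s ^ 2) = 1 := by
    rw [cos_sq_arctan]; field_simp
  rw [e1, e2, e3]
  simp
  rw [hp]
  linear_combination e4

lemma mw_antip (b c v p : ℝ) (hb : |b| ≤ p) (hc : |c| ≤ v) (h : v ^ 2 - c ^ 2 = p ^ 2 - b ^ 2) :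
    max (p - c) (v + b) + max (p + c) (v - b) = p + v + |b + c| := by
  have key : |v - p| ≤ |b + c| := by
    have h0 : 0 ≤ v + p := by linarith [abs_nonneg b, abs_nonneg c]
    rcases h0.eq_or_lt with h1 | h1
    · have hp : p = 0 := by linarith [abs_nonneg b, abs_nonneg c]
      have hv : v = 0 := by linarith [abs_nonneg b, abs_nonneg c]
      simp [hp, hv]
    · have e : |v - p| * (v + p) = |b + c| * |c - b| := by
        nth_rewrite 1 [← abs_of_pos h1]
        rw [← abs_mul, ← abs_mul]; congr 1; linarith
      have e2 : |c - b| ≤ v + p := (abs_sub c b).trans (by linarith)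
      have e3 := mul_le_mul_of_nonneg_left e2 (abs_nonneg (b + c))
      exact le_of_mul_le_mul_right (by linarith) h1
  have k1 := abs_le.1 key
  rcases le_total 0 (b + c) with h0 | h0
  · rw [abs_of_nonneg h0] at k1 ⊢
    rw [max_eq_right (by linarith), max_eq_left (by linarith)]; ring
  · rw [abs_of_nonpos h0] at k1 ⊢
    rw [max_eq_left (by linarith), max_eq_right (by linarith)]; ring


lemma mw_G (θ : ℝ) (hθ : 0 < cos θ) :
    ∫ φ in (0 : ℝ)..π, sin φ * √(cos θ ^ 2 * sin φ ^ 2 + cos φ ^ 2)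
      = 1 + (1 / 2) * ∫ y in (-1 : ℝ)..1, cos θ ^ 2 / (1 - sin θ ^ 2 * y ^ 2) := by
  set c := cos θ with hcdef
  set s := sin θ with hsdef
  have hsc : s ^ 2 + c ^ 2 = 1 := sin_sq_add_cos_sq θ
  have hq : ∀ t : ℝ, 0 < c ^ 2 + s ^ 2 * t ^ 2 := fun t => by positivity
  have hr : ∀ t : ℝ, 0 < √(c ^ 2 + s ^ 2 * t ^ 2) := fun t => sqrt_pos.2 (hq t)
  have hr2 : ∀ t : ℝ, √(c ^ 2 + s ^ 2 * t ^ 2) ^ 2 = c ^ 2 + s ^ 2 * t ^ 2 :=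
    fun t => sq_sqrt (hq t).le
  have hcont : Continuous fun t : ℝ => √(c ^ 2 + s ^ 2 * t ^ 2) := by fun_prop
  -- substitution t = cos φ
  have s1 : ∫ φ in (0 : ℝ)..π, sin φ * √(c ^ 2 * sin φ ^ 2 + cos φ ^ 2)
      = ∫ t in (-1 : ℝ)..1, √(c ^ 2 + s ^ 2 * t ^ 2) := by
    have h := intervalIntegral.integral_comp_mul_deriv (a := 0) (b := π) (f := cos)
      (f' := fun x => - sin x) (g := fun t : ℝ => √(c ^ 2 + s ^ 2 * t ^ 2))
      (fun x _ => hasDerivAt_cos x) (by fun_prop) hcont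
    rw [cos_zero, cos_pi] at h
    rw [intervalIntegral.integral_symm 1 (-1), ← h, ← intervalIntegral.integral_neg]
    refine intervalIntegral.integral_congr fun φ _ => ?_
    have e : c ^ 2 * sin φ ^ 2 + cos φ ^ 2 = c ^ 2 + s ^ 2 * cos φ ^ 2 := by
      have h1 := sin_sq_add_cos_sq φ
      linear_combination c ^ 2 * h1 - cos φ ^ 2 * hsc
    simp only [e, Function.comp]
    ring
  have hdr : ∀ t : ℝ, HasDerivAt (fun t : ℝ => √(c ^ 2 + s ^ 2 * t ^ 2))
      (s ^ 2 * t / √(c ^ 2 + s ^ 2 * t ^ 2)) t := by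
    intro t
    have h1 := ((((hasDerivAt_id t).pow 2).const_mul (s ^ 2)).const_add (c ^ 2)).sqrt (hq t).ne'
    refine h1.congr_deriv ?_
    have := (hr t).ne'
    simp
    field_simp
  have hci : Continuous fun t : ℝ => c ^ 2 * (1 / √(c ^ 2 + s ^ 2 * t ^ 2)) :=
    continuous_const.mul (continuous_const.div hcont fun t => (hr t).ne')
  have s2 : 2 * ∫ t in (-1 : ℝ)..1, √(c ^ 2 + s ^ 2 * t ^ 2)
      = 2 + ∫ t in (-1 : ℝ)..1, c ^ 2 * (1 / √(c ^ 2 + s ^ 2 * t ^ 2)) := by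
    have hd : ∀ t ∈ Set.uIcc (-1 : ℝ) 1, HasDerivAt (fun t : ℝ => t * √(c ^ 2 + s ^ 2 * t ^ 2))
        (2 * √(c ^ 2 + s ^ 2 * t ^ 2) - c ^ 2 * (1 / √(c ^ 2 + s ^ 2 * t ^ 2))) t := by
      intro t _
      refine ((hasDerivAt_id t).mul (hdr t)).congr_deriv ?_
      have := (hr t).ne'
      simp only [id]
      field_simp
      rw [hr2]; ring
    have hcc : Continuous fun t : ℝ => 2 * √(c ^ 2 + s ^ 2 * t ^ 2) := by fun_prop
    have h := intervalIntegral.integral_eq_sub_of_hasDerivAt hd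
      ((hcc.sub hci).intervalIntegrable _ _)
    rw [intervalIntegral.integral_sub (hcc.intervalIntegrable _ _) (hci.intervalIntegrable _ _),
      intervalIntegral.integral_const_mul] at h
    have e : c ^ 2 + s ^ 2 = 1 := by linarith
    norm_num [e] at h
    norm_num
    linarith
  have s3 : ∫ t in (-1 : ℝ)..1, c ^ 2 * (1 / √(c ^ 2 + s ^ 2 * t ^ 2))
      = ∫ y in (-1 : ℝ)..1, c ^ 2 / (1 - s ^ 2 * y ^ 2) := by
    have hy : ∀ t : ℝ, 1 - s ^ 2 * (t / √(c ^ 2 + s ^ 2 * t ^ 2)) ^ 2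
        = c ^ 2 / (c ^ 2 + s ^ 2 * t ^ 2) := by
      intro t
      rw [div_pow, hr2]
      have := (hq t).ne'
      field_simp
      ring
    have h := intervalIntegral.integral_comp_mul_deriv' (a := -1) (b := 1)
      (f := fun t : ℝ => t / √(c ^ 2 + s ^ 2 * t ^ 2))
      (f' := fun t : ℝ => c ^ 2 / (√(c ^ 2 + s ^ 2 * t ^ 2)) ^ 3)
      (g := fun y : ℝ => c ^ 2 / (1 - s ^ 2 * y ^ 2))
      (fun t _ => by
        refine ((hasDerivAt_id t).div (hdr t) (hr t).ne').congr_deriv ?_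
        have := (hr t).ne'
        simp only [id]
        field_simp
        rw [hr2]; ring)
      (Continuous.continuousOn (continuous_const.div (by fun_prop)
        fun t => (pow_pos (hr t) 3).ne'))
      (by
        refine ContinuousOn.div (by fun_prop) (by fun_prop) ?_
        rintro _ ⟨t, _, rfl⟩
        simp only [hy]
        have := hq t
        positivity)
    have e : c ^ 2 + s ^ 2 = 1 := by linarith
    norm_num [e] at h
    rw [← h]
    refine intervalIntegral.integral_congr fun t _ => ?_
    have h3 := hy t
    rw [div_pow] at h3
    have := (hr t).ne'
    have := (hq t).ne'
    simp only [hy]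
    field_simp
    rw [hr2]
  rw [s1]
  linarith

lemma mw_A (y : ℝ) (h0 : y ≠ 0) (h1 : -1 < y) (h2 : y < 1) :
    ∫ θ in (-(π / 2))..(π / 2), cos θ ^ 2 / (1 - sin θ ^ 2 * y ^ 2) = π / (1 + √(1 - y ^ 2)) := by
  have hy : 0 < 1 - y ^ 2 := by nlinarith
  set k := √(1 - y ^ 2) with hk
  have hkp : 0 < k := sqrt_pos.2 hy
  have hk2 : k ^ 2 = 1 - y ^ 2 := sq_sqrt hy.le
  have hK := mw_K k hkp
  have hs : ∀ θ, cos θ ^ 2 = 1 - sin θ ^ 2 := fun θ => by rw [← sin_sq_add_cos_sq θ]; ring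
  have e : ∀ θ, cos θ ^ 2 + k ^ 2 * sin θ ^ 2 = 1 - sin θ ^ 2 * y ^ 2 := fun θ => by
    rw [hk2, hs]; ring
  have hp : ∀ θ, 1 - sin θ ^ 2 * y ^ 2 ≠ 0 := fun θ => by
    have := sin_sq_le_one θ
    nlinarith [sq_nonneg y]
  have hc : Continuous fun θ : ℝ => (1 - y ^ 2) * (1 / (cos θ ^ 2 + k ^ 2 * sin θ ^ 2)) :=
    continuous_const.mul (continuous_const.div (by fun_prop) fun θ => by rw [e]; exact hp θ)
  have : ∫ θ in (-(π / 2))..(π / 2), cos θ ^ 2 / (1 - sin θ ^ 2 * y ^ 2)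
      = ∫ θ in (-(π / 2))..(π / 2),
        (1 / y ^ 2) * (1 - (1 - y ^ 2) * (1 / (cos θ ^ 2 + k ^ 2 * sin θ ^ 2))) := by
    refine intervalIntegral.integral_congr fun θ _ => ?_
    simp only [e]
    have := hp θ
    rw [hs]
    field_simp
    ring
  rw [this, intervalIntegral.integral_const_mul,
    intervalIntegral.integral_sub (by simp) (hc.intervalIntegrable _ _),
    intervalIntegral.integral_const_mul, hK]
  have hy2 : y ^ 2 = (1 - k) * (1 + k) := by linarith
  have h1k : 1 - k ≠ 0 := by
    intro h; rw [h] at hy2; simp at hy2; exact h0 hy2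
  rw [← hk2, hy2]
  have : 1 + k ≠ 0 := by positivity
  simp
  field_simp

lemma mw_B : ∫ y in (-1 : ℝ)..1, π / (1 + √(1 - y ^ 2)) = π * (π - 2) := by
  have hpos : ∀ y : ℝ, 1 + √(1 - y ^ 2) ≠ 0 := fun y => by positivity
  have h := intervalIntegral.integral_comp_mul_deriv (a := -(π / 2)) (b := π / 2) (f := sin)
    (f' := cos) (g := fun y : ℝ => π / (1 + √(1 - y ^ 2)))
    (fun x _ => hasDerivAt_sin x) (by fun_prop) (continuous_const.div (by fun_prop) hpos)
  rw [sin_neg, sin_pi_div_two] at h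
  rw [← h]
  have hcp : ∀ x ∈ Set.uIcc (-(π / 2)) (π / 2), 0 ≤ cos x := by
    intro x hx
    rw [Set.uIcc_of_le (by linarith [pi_pos])] at hx
    exact cos_nonneg_of_mem_Icc hx
  have hd : ∀ x ∈ Set.uIcc (-(π / 2)) (π / 2), HasDerivAt
      (fun x => π * (x - sin x / (1 + cos x)))
      (((fun y : ℝ => π / (1 + √(1 - y ^ 2))) ∘ sin) x * cos x) x := by
    intro x hx
    have hc := hcp x hx
    have hne : 1 + cos x ≠ 0 := by positivity
    have h1 := ((hasDerivAt_id x).sub ((hasDerivAt_sin x).div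
      ((hasDerivAt_cos x).const_add 1) hne)).const_mul π
    refine h1.congr_deriv ?_
    have e : √(1 - sin x ^ 2) = cos x := by
      rw [← cos_sq', sqrt_sq hc]
    simp only [Function.comp, e]
    field_simp
    have := sin_sq_add_cos_sq x
    linear_combination (-1 : ℝ) * this
  rw [intervalIntegral.integral_eq_sub_of_hasDerivAt hd]
  · simp; ring
  · refine Continuous.intervalIntegrable ?_ _ _
    exact ((continuous_const.div (by fun_prop) hpos).comp continuous_sin).mul continuous_cos

lemma mw_J : ∫ θ in (-(π / 2))..(π / 2), ∫ φ in (0 : ℝ)..π,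
      sin φ * √(cos θ ^ 2 * sin φ ^ 2 + cos φ ^ 2) = π ^ 2 / 2 := by
  have hint : MeasureTheory.IntegrableOn
      (Function.uncurry fun θ y : ℝ => cos θ ^ 2 / (1 - sin θ ^ 2 * y ^ 2))
      (Set.uIoc (-(π / 2)) (π / 2) ×ˢ Set.uIoc (-1 : ℝ) 1) := by
    have hms : MeasurableSet (Set.uIoc (-(π / 2)) (π / 2) ×ˢ Set.uIoc (-1 : ℝ) 1) :=
      measurableSet_uIoc.prod measurableSet_uIoc
    refine MeasureTheory.Measure.integrableOn_of_bounded (M := 1) ?_ ?_ ?_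
    · rw [MeasureTheory.Measure.volume_eq_prod, MeasureTheory.Measure.prod_prod]
      simp [Set.uIoc, ENNReal.mul_eq_top]
    · refine Measurable.aestronglyMeasurable ?_
      simp only [Function.uncurry_def]
      fun_prop
    · filter_upwards [MeasureTheory.ae_restrict_mem hms] with x hx
      obtain ⟨-, hx⟩ := hx
      rw [Set.uIoc_of_le (by norm_num)] at hx
      have h1 : x.2 ^ 2 ≤ 1 := by nlinarith [hx.1, hx.2]
      have h2 := sin_sq_add_cos_sq x.1
      have h3 : cos x.1 ^ 2 ≤ 1 - sin x.1 ^ 2 * x.2 ^ 2 := by nlinarith [sq_nonneg (sin x.1)]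
      have h4 : 0 ≤ 1 - sin x.1 ^ 2 * x.2 ^ 2 := (sq_nonneg _).trans h3
      simp only [Function.uncurry]
      rw [norm_of_nonneg (by positivity)]
      exact div_le_one_of_le₀ h3 h4
  have hsw := MeasureTheory.intervalIntegral_intervalIntegral_swap hint
  have hR : ∫ y in (-1 : ℝ)..1, ∫ θ in (-(π / 2))..(π / 2),
      cos θ ^ 2 / (1 - sin θ ^ 2 * y ^ 2) = π * (π - 2) := by
    rw [← mw_B]
    refine intervalIntegral.integral_congr_ae ?_
    have a1 : ∀ᵐ y : ℝ, y ≠ 0 := by simp [MeasureTheory.ae_iff]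
    have a2 : ∀ᵐ y : ℝ, y ≠ 1 := by simp [MeasureTheory.ae_iff]
    filter_upwards [a1, a2] with y h0 h1 hy
    rw [Set.uIoc_of_le (by norm_num)] at hy
    exact mw_A y h0 hy.1 (lt_of_le_of_ne hy.2 h1)
  have hI : IntervalIntegrable (fun θ => ∫ y in (-1 : ℝ)..1, cos θ ^ 2 / (1 - sin θ ^ 2 * y ^ 2))
      MeasureTheory.volume (-(π / 2)) (π / 2) := by
    rw [intervalIntegrable_iff]
    unfold MeasureTheory.IntegrableOn at hint
    rw [MeasureTheory.Measure.volume_eq_prod, ← MeasureTheory.Measure.prod_restrict] at hint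
    have := hint.integral_prod_left
    simpa [intervalIntegral.integral_of_le, Set.uIoc_of_le, MeasureTheory.IntegrableOn] using this
  have hE : ∫ θ in (-(π / 2))..(π / 2), ∫ φ in (0 : ℝ)..π,
      sin φ * √(cos θ ^ 2 * sin φ ^ 2 + cos φ ^ 2)
      = ∫ θ in (-(π / 2))..(π / 2),
        (1 + (1 / 2) * ∫ y in (-1 : ℝ)..1, cos θ ^ 2 / (1 - sin θ ^ 2 * y ^ 2)) := by
    refine intervalIntegral.integral_congr_Ioo_of_le (by linarith [pi_pos]) fun θ hθ => ?_
    exact mw_G θ (cos_pos_of_mem_Ioo hθ)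
  rw [hE, intervalIntegral.integral_add (by simp) (hI.const_mul _),
    intervalIntegral.integral_const_mul, hsw, hR]
  simp
  ring

/-- the direct mean-width double integral for Example 2 equals π(√2 + π)/2. -/
theorem mean_width_example_two_direct :
    (∫ θ in (-(Real.pi / 2))..(Real.pi / 2), ∫ φ in (0 : ℝ)..Real.pi,
        max (Real.sin φ - Real.cos φ)
            (Real.sqrt (Real.cos θ ^ 2 * Real.sin φ ^ 2 + Real.cos φ ^ 2)
              + Real.sin θ * Real.sin φ) * Real.sin φ) =
      Real.pi * (Real.sqrt 2 + Real.pi) / 2 := by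
  set f : ℝ → ℝ → ℝ := fun θ φ => max (sin φ - cos φ)
    (√(cos θ ^ 2 * sin φ ^ 2 + cos φ ^ 2) + sin θ * sin φ) * sin φ with hf
  change ∫ θ in (-(π / 2))..(π / 2), ∫ φ in (0 : ℝ)..π, f θ φ = _
  have hfc : Continuous (Function.uncurry f) := by
    simp only [hf, Function.uncurry_def]; fun_prop
  have hIc : Continuous fun θ => ∫ φ in (0 : ℝ)..π, f θ φ :=
    intervalIntegral.continuous_parametric_intervalIntegral_of_continuous' hfc _ _
  have hgc : Continuous (Function.uncurry fun θ φ : ℝ =>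
      sin φ * √(cos θ ^ 2 * sin φ ^ 2 + cos φ ^ 2)) := by
    simp only [Function.uncurry_def]; fun_prop
  have hGc : Continuous fun θ => ∫ φ in (0 : ℝ)..π,
      sin φ * √(cos θ ^ 2 * sin φ ^ 2 + cos φ ^ 2) :=
    intervalIntegral.continuous_parametric_intervalIntegral_of_continuous' hgc _ _
  have hGc2 : Continuous fun θ => π / 2 + ∫ φ in (0 : ℝ)..π,
      sin φ * √(cos θ ^ 2 * sin φ ^ 2 + cos φ ^ 2) := continuous_const.add hGc
  have hac : Continuous fun θ => 1 + sin θ * arctan (sin θ) := by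
    have := continuous_arctan; fun_prop
  have hsum : ∀ θ, (∫ φ in (0 : ℝ)..π, f θ φ) + (∫ φ in (0 : ℝ)..π, f (-θ) φ)
      = π / 2 + (∫ φ in (0 : ℝ)..π, sin φ * √(cos θ ^ 2 * sin φ ^ 2 + cos φ ^ 2))
        + (1 + sin θ * arctan (sin θ)) := by
    intro θ
    have h1 := intervalIntegral.integral_comp_sub_left (a := 0) (b := π) (f (-θ)) π
    rw [sub_self, sub_zero] at h1
    have c1 : Continuous fun φ => f θ φ := hfc.uncurry_left θ
    have c2 : Continuous fun φ => f (-θ) (π - φ) :=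
      (hfc.uncurry_left (-θ)).comp (continuous_const.sub continuous_id)
    have c3 : Continuous fun φ => sin φ * √(cos θ ^ 2 * sin φ ^ 2 + cos φ ^ 2) := by fun_prop
    have c4 : Continuous fun φ => sin φ * |sin θ * sin φ + cos φ| := by fun_prop
    have c6 : Continuous fun φ => sin φ ^ 2 + sin φ * √(cos θ ^ 2 * sin φ ^ 2 + cos φ ^ 2) := by
      fun_prop
    have c5 : Continuous fun φ => sin φ ^ 2 := by fun_prop
    have h5 : ∫ φ in (0 : ℝ)..π, sin φ ^ 2 = π / 2 := by
      rw [integral_sin_sq]; simp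
    rw [← h1, ← mw_inner_s11, ← h5, ← intervalIntegral.integral_add (c1.intervalIntegrable _ _)
      (c2.intervalIntegrable _ _), ← intervalIntegral.integral_add (c5.intervalIntegrable _ _)
      (c3.intervalIntegrable _ _), ← intervalIntegral.integral_add
      (c6.intervalIntegrable _ _) (c4.intervalIntegrable _ _)]
    refine intervalIntegral.integral_congr fun φ hφ => ?_
    rw [Set.uIcc_of_le pi_pos.le] at hφ
    have hs := sin_nonneg_of_nonneg_of_le_pi hφ.1 hφ.2
    have key := mw_antip (sin θ * sin φ) (cos φ) (√(cos θ ^ 2 * sin φ ^ 2 + cos φ ^ 2)) (sin φ)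
      (by
        rw [abs_mul, abs_of_nonneg hs]
        exact mul_le_of_le_one_left hs (abs_sin_le_one θ))
      (by
        refine abs_le_sqrt ?_
        nlinarith [sq_nonneg (cos θ * sin φ)])
      (by
        rw [sq_sqrt (by positivity)]
        linear_combination sin φ ^ 2 * sin_sq_add_cos_sq θ)
    simp only [hf, sin_neg, cos_neg, sin_pi_sub, cos_pi_sub, neg_sq, neg_mul, sub_neg_eq_add,
      ← sub_eq_add_neg]
    linear_combination sin φ * key
  have hn := intervalIntegral.integral_comp_neg (a := -(π / 2)) (b := π / 2)
    (fun θ => ∫ φ in (0 : ℝ)..π, f θ φ)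
  rw [neg_neg] at hn
  have hInc : Continuous fun θ => ∫ φ in (0 : ℝ)..π, f (-θ) φ := hIc.comp continuous_neg
  have h2 : (∫ θ in (-(π / 2))..(π / 2), ∫ φ in (0 : ℝ)..π, f θ φ)
      + (∫ θ in (-(π / 2))..(π / 2), ∫ φ in (0 : ℝ)..π, f θ φ)
      = π * (π / 2) + π ^ 2 / 2 + √2 * π := by
    conv_lhs => rw [← hn]
    conv_lhs => arg 1; rw [hn]
    rw [← intervalIntegral.integral_add (hIc.intervalIntegrable _ _)
      (hInc.intervalIntegrable _ _), intervalIntegral.integral_congr (fun θ _ => hsum θ),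
      intervalIntegral.integral_add (hGc2.intervalIntegrable _ _)
      (hac.intervalIntegrable _ _), intervalIntegral.integral_add (by simp)
      (hGc.intervalIntegrable _ _), mw_J, mw_L1]
    simp
    ring
  linarith
end

section
/- The Lebesgue volume of the convex hull in ℝ³ of the union of the two unit disks D₁ = {(x,y,0) : x² + (y+1)² ≤ 1} and D₂ = {(0,y,z) : (y−1)² + z² ≤ 1} equals 2π/√3. -/
open Real MeasureTheory

noncomputable def pf (t : ℝ) : ℝ := √2 * sin t
noncomputable def rf (t : ℝ) : ℝ := √2 * cos t

lemma pf_deriv (t : ℝ) : HasDerivAt pf (rf t) t := (hasDerivAt_sin t).const_mul _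
lemma rf_deriv (t : ℝ) : HasDerivAt rf (-pf t) t := by
  have := (hasDerivAt_cos t).const_mul (√2)
  exact this.congr_deriv (by unfold pf; ring)
lemma pr_sq (t : ℝ) : pf t ^ 2 + rf t ^ 2 = 2 := by
  unfold pf rf
  have h := sin_sq_add_cos_sq t
  have h2 : √2 ^ 2 = 2 := Real.sq_sqrt (by norm_num)
  linear_combination 2 * h + (sin t ^ 2 + cos t ^ 2) * h2
lemma pf_pos {t : ℝ} (h : t ∈ Set.Ioo 0 (π / 4)) : 0 < pf t := by
  have := sin_pos_of_pos_of_lt_pi h.1 (by linarith [h.2, pi_pos])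
  unfold pf; positivity
lemma rf_gt {t : ℝ} (h : t ∈ Set.Ioo 0 (π / 4)) : 1 < rf t := by
  have h1 : cos (π / 4) < cos t := cos_lt_cos_of_nonneg_of_le_pi_div_two h.1.le (by linarith [h.2, pi_pos]) h.2
  rw [cos_pi_div_four] at h1
  unfold rf
  have h2 : √2 * √2 = 2 := Real.mul_self_sqrt (by norm_num)
  have h3 : 0 < √2 := by positivity
  nlinarith
lemma pf_lt {t : ℝ} (h : t ∈ Set.Ioo 0 (π / 4)) : pf t < 1 := by
  have := rf_gt h
  have := pr_sq t
  nlinarith [pf_pos h]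
lemma pf_cont : Continuous pf := by unfold pf; fun_prop
lemma rf_cont : Continuous rf := by unfold rf; fun_prop

noncomputable def af (t : ℝ) : ℝ := 2 * rf t / (1 + rf t ^ 2)
noncomputable def bf (t : ℝ) : ℝ := 2 * pf t / (1 + pf t ^ 2)
noncomputable def af' (t : ℝ) : ℝ := 2 * pf t * (rf t ^ 2 - 1) / (1 + rf t ^ 2) ^ 2
noncomputable def bf' (t : ℝ) : ℝ := 2 * rf t * (1 - pf t ^ 2) / (1 + pf t ^ 2) ^ 2

lemma af_deriv (t : ℝ) : HasDerivAt af (af' t) t := by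
  have h : (1 + rf t ^ 2) ≠ 0 := by positivity
  convert! ((rf_deriv t).const_mul 2).div (((rf_deriv t).pow 2).const_add 1) h using 1
  unfold af'; congr 1; simp; ring
lemma bf_deriv (t : ℝ) : HasDerivAt bf (bf' t) t := by
  have h : (1 + pf t ^ 2) ≠ 0 := by positivity
  convert! ((pf_deriv t).const_mul 2).div (((pf_deriv t).pow 2).const_add 1) h using 1
  unfold bf'; congr 1; simp; ring

/-- the parametrization -/
noncomputable def Ph (w : ℝ × ℝ) : ℝ × ℝ := ((1 - w.2) * af w.1, w.2 * bf w.1)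
noncomputable def yv (w : ℝ × ℝ) : ℝ := w.2 * (2 / (1 + pf w.1 ^ 2)) - (1 - w.2) * (2 / (1 + rf w.1 ^ 2))
noncomputable def jac (w : ℝ × ℝ) : ℝ := (1 - w.2) * af' w.1 * bf w.1 + w.2 * af w.1 * bf' w.1
def Dm : Set (ℝ × ℝ) := Set.Ioo 0 (π / 4) ×ˢ Set.Ioo 0 1
def Tr : Set (ℝ × ℝ) := {w | 0 < w.1 ∧ 0 < w.2 ∧ w.1 + w.2 < 1}

noncomputable def mkL (a b c d : ℝ) : (ℝ × ℝ) →L[ℝ] (ℝ × ℝ) :=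
  (a • ContinuousLinearMap.fst ℝ ℝ ℝ + b • ContinuousLinearMap.snd ℝ ℝ ℝ).prod
  (c • ContinuousLinearMap.fst ℝ ℝ ℝ + d • ContinuousLinearMap.snd ℝ ℝ ℝ)

lemma mkL_det (a b c d : ℝ) : (mkL a b c d).det = a * d - b * c := by
  rw [ContinuousLinearMap.det, ← LinearMap.det_toMatrix (Module.Basis.finTwoProd ℝ), Matrix.det_fin_two]
  simp [LinearMap.toMatrix_apply, mkL]

noncomputable def Ph' (w : ℝ × ℝ) : (ℝ × ℝ) →L[ℝ] (ℝ × ℝ) :=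
  mkL ((1 - w.2) * af' w.1) (- af w.1) (w.2 * bf' w.1) (bf w.1)

lemma Ph_deriv (w : ℝ × ℝ) : HasFDerivAt Ph (Ph' w) w := by
  have h1 := (af_deriv w.1).comp_hasFDerivAt w (hasFDerivAt_fst (𝕜 := ℝ) (p := w))
  have h2 := (bf_deriv w.1).comp_hasFDerivAt w (hasFDerivAt_fst (𝕜 := ℝ) (p := w))
  have h3 := (hasFDerivAt_snd (𝕜 := ℝ) (p := w))
  convert! ((h3.const_sub 1).mul h1).prodMk (h3.mul h2) using 1
  ext <;> simp [Ph', mkL]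

lemma Ph'_det (w : ℝ × ℝ) : (Ph' w).det = jac w := by
  rw [Ph', mkL_det, jac]; ring

lemma jac_nonneg {w : ℝ × ℝ} (hw : w ∈ Dm) : 0 ≤ jac w := by
  obtain ⟨h1, h2⟩ := hw
  have hp := pf_pos h1
  have hp1 := pf_lt h1
  have hr := rf_gt h1
  have a1 : 0 ≤ 1 - w.2 := by linarith [h2.2]
  have a2 : 0 ≤ w.2 := h2.1.le
  have a3 : 0 ≤ rf w.1 ^ 2 - 1 := by nlinarith
  have a4 : 0 ≤ 1 - pf w.1 ^ 2 := by nlinarith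
  have a5 : 0 ≤ rf w.1 := by linarith
  unfold jac af bf af' bf'
  positivity

noncomputable def H (t : ℝ) : ℝ := 8 * cos (2*t) ^ 2 * (4 + cos (2*t)^2) / (4 - cos (2*t)^2)^3

noncomputable def GG (t : ℝ) : ℝ :=
  sin (2*t) * cos (2*t) / (4 - cos (2*t)^2) + 2/3 * (sin (2*t) * cos (2*t)^3 / (4 - cos (2*t)^2)^2)
   + 1/(2*√3) * (2 * t + arctan ((2 - √3) * (sin (2*t) * cos (2*t)) / (√3 * cos (2*t)^2 + 2 * sin (2*t)^2)))

lemma GG_deriv (t : ℝ) : HasDerivAt GG (H t) t := by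
  have hs : HasDerivAt (fun t : ℝ => sin (2*t)) (cos (2*t) * 2) t := by
    simpa using ((hasDerivAt_id t).const_mul 2).sin
  have hc : HasDerivAt (fun t : ℝ => cos (2*t)) (-sin (2*t) * 2) t := by
    simpa using ((hasDerivAt_id t).const_mul 2).cos
  have hsc := sin_sq_add_cos_sq (2*t)
  have h3 : √3 ^ 2 = 3 := Real.sq_sqrt (by norm_num)
  have h3p : 0 < √3 := by positivity
  have n1 : (4 - cos (2*t)^2) ≠ 0 := by nlinarith [sq_nonneg (sin (2*t))]
  have n2 : (√3 * cos (2*t)^2 + 2 * sin (2*t)^2) ≠ 0 := by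
    have : √3 < 2 := by nlinarith
    have : 0 < √3 * (cos (2*t)^2 + sin (2*t)^2) := by rw [add_comm, hsc]; linarith
    nlinarith [sq_nonneg (sin (2*t))]
  have d1 := (hs.mul hc).div ((hc.pow 2).const_sub 4) n1
  have d2 := ((hs.mul (hc.pow 3)).div (((hc.pow 2).const_sub 4).pow 2) (pow_ne_zero 2 n1)).const_mul (2/3)
  have d3 := (((hs.mul hc).const_mul (2-√3)).div (((hc.pow 2).const_mul √3).add ((hs.pow 2).const_mul 2)) n2).arctan
  have e3 : HasDerivAt (fun t : ℝ => 2 * t + arctan ((2 - √3) * (sin (2*t) * cos (2*t)) / (√3 * cos (2*t)^2 + 2 * sin (2*t)^2))) (4 * √3 / (4 - cos (2*t)^2)) t := by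
    refine (((hasDerivAt_id t).const_mul 2).add d3).congr_deriv ?_
    simp only [Pi.add_apply, Pi.mul_apply, Pi.pow_apply, Pi.div_apply]
    clear d1 d2 d3 hs hc
    generalize sin (2*t) = S at *
    generalize cos (2*t) = C at *
    generalize √3 = q at *
    have hS : S ^ 2 = 1 - C ^ 2 := by linarith
    have k1 : 1 + ((2 - q) * (S * C) / (q * C ^ 2 + 2 * S ^ 2)) ^ 2 = (4 - C ^ 2) / (q * C ^ 2 + 2 * S ^ 2) ^ 2 := by
      rw [eq_div_iff (pow_ne_zero 2 n2), div_pow, add_mul, div_mul_cancel₀ _ (pow_ne_zero 2 n2)]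
      have : (4 - C ^ 2) = (3 * C ^ 2 + 4 * S ^ 2) * (S ^ 2 + C ^ 2) := by rw [hsc]; linarith
      rw [this]
      linear_combination (C ^ 4 + S ^ 2 * C ^ 2) * h3
    have gen : ∀ E D X : ℝ, D ≠ 0 → 1 / (E / D ^ 2) * (X / D ^ 2) = X / E := by
      intro E D X hD; field_simp
    rw [k1, gen _ _ _ n2, eq_div_iff n1, add_mul, div_mul_cancel₀ _ n1]
    norm_num
    have h33 : q ^ 3 = 3 * q := by rw [← h3]; ring
    have hS4 : S ^ 4 = (1 - C ^ 2) ^ 2 := by rw [← hS]; ring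
    ring_nf
    simp only [hS, h3, hS4]
    ring
  have d4 := e3.const_mul (1/(2*√3))
  refine ((d1.add d2).add d4).congr_deriv ?_
  unfold H
  simp only [Pi.mul_apply, Pi.pow_apply]
  have k : 1 / (2 * √3) * (4 * √3 / (4 - cos (2 * t) ^ 2)) = 2 / (4 - cos (2*t)^2) := by
    field_simp; norm_num
  rw [k]
  clear d1 d2 d3 d4 e3 hs hc k n2 h3 h3p
  generalize sin (2*t) = S at *
  generalize cos (2*t) = C at *
  have hS : S ^ 2 = 1 - C ^ 2 := by linarith
  field_simp
  norm_num
  ring_nf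
  simp only [hS]
  ring

lemma H_int : ∫ t in (0:ℝ)..(π/4), H t = π / (4 * √3) := by
  have hc : Continuous H := by
    unfold H
    refine Continuous.div (by fun_prop) (by fun_prop) fun t => pow_ne_zero 3 ?_
    nlinarith [sq_nonneg (sin (2*t)), sin_sq_add_cos_sq (2*t)]
  rw [intervalIntegral.integral_eq_sub_of_hasDerivAt (fun t _ => GG_deriv t) (hc.intervalIntegrable _ _)]
  have : 2 * (π / 4) = π / 2 := by ring
  simp [GG, this]
  field_simp
  norm_num

lemma inner_int (t : ℝ) : ∫ s in (0:ℝ)..1, jac (t, s) * yv (t, s) = H t := by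
  have key : ∀ A B e f : ℝ, ∫ s in (0:ℝ)..1, ((1 - s) * A + s * B) * (s * e - (1 - s) * f)
      = e * B / 3 + e * A / 6 - f * A / 3 - f * B / 6 := by
    intro A B e f
    have : ∀ s : ℝ, HasDerivAt (fun s : ℝ => -A * f * s + (A * e + A * f + A * f - B * f) * s ^ 2 / 2 + (B * e + B * f - A * e - A * f) * s ^ 3 / 3)
       (((1 - s) * A + s * B) * (s * e - (1 - s) * f)) s := by
      intro s
      have := (((hasDerivAt_id s).const_mul (-A * f)).add ((((hasDerivAt_id s).pow 2).const_mul (A * e + A * f + A * f - B * f)).div_const 2)).add ((((hasDerivAt_id s).pow 3).const_mul (B * e + B * f - A * e - A * f)).div_const 3)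
      refine this.congr_deriv ?_
      simp; ring
    rw [intervalIntegral.integral_eq_sub_of_hasDerivAt (fun s _ => this s) (Continuous.intervalIntegrable (by fun_prop) _ _)]
    ring
  have : ∀ s, jac (t, s) * yv (t, s) = ((1 - s) * (af' t * bf t) + s * (af t * bf' t)) * (s * (2 / (1 + pf t ^ 2)) - (1 - s) * (2 / (1 + rf t ^ 2))) := by
    intro s; simp only [jac, yv]; ring
  simp_rw [this]
  rw [key]
  have hpr := pr_sq t
  have hc : cos (2 * t) = 1 - pf t ^ 2 := by
    rw [cos_two_mul', pf, mul_pow, Real.sq_sqrt (by norm_num)]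
    linarith [sin_sq_add_cos_sq t]
  unfold H af bf af' bf'
  rw [hc]
  have hr : rf t ^ 2 = 2 - pf t ^ 2 := by linarith
  have n1 : 1 + pf t ^ 2 ≠ 0 := by positivity
  have n2 : (3 - pf t ^ 2) ≠ 0 := by nlinarith [sq_nonneg (rf t)]
  have n3 : 4 - (1 - pf t ^ 2) ^ 2 = (1 + pf t ^ 2) * (3 - pf t ^ 2) := by ring
  have n4 : 1 + rf t ^ 2 = 3 - pf t ^ 2 := by linarith
  rw [n3, n4]
  field_simp
  ring_nf
  simp only [hr]
  ring

lemma Dm_int : IntegrableOn (fun w => jac w * yv w) Dm ∧ ∫ w in Dm, jac w * yv w = π / (4 * √3) := by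
  have hc : Continuous (fun w => jac w * yv w) := by
    have := pf_cont
    have := rf_cont
    unfold jac yv af bf af' bf'
    fun_prop (disch := intros; positivity)
  have hi : IntegrableOn (fun w => jac w * yv w) Dm := by
    have : IntegrableOn (fun w => jac w * yv w) (Set.Icc 0 (π/4) ×ˢ Set.Icc 0 1) :=
      hc.continuousOn.integrableOn_compact (isCompact_Icc.prod isCompact_Icc)
    exact this.mono_set (Set.prod_mono Set.Ioo_subset_Icc_self Set.Ioo_subset_Icc_self)
  refine ⟨hi, ?_⟩
  rw [Dm, Measure.volume_eq_prod, setIntegral_prod _ hi, ← H_int, intervalIntegral.integral_of_le (by positivity), ← integral_Ioc_eq_integral_Ioo]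
  congr 1
  ext t
  rw [← inner_int, intervalIntegral.integral_of_le (by norm_num), integral_Ioc_eq_integral_Ioo]

noncomputable def kp (w : ℝ × ℝ) : ℝ := w.2 * (2 / (1 + pf w.1 ^ 2))
noncomputable def ta (w : ℝ × ℝ) : ℝ := (1 - w.2) * (2 / (1 + rf w.1 ^ 2))

lemma Ph_eq (w : ℝ × ℝ) : Ph w = (rf w.1 * ta w, pf w.1 * kp w) := by
  unfold Ph ta kp af bf; ext <;> simp <;> ring
lemma yv_eq (w : ℝ × ℝ) : yv w = kp w - ta w := rfl
lemma kt (w : ℝ × ℝ) : kp w * (1 + pf w.1 ^ 2) + ta w * (1 + rf w.1 ^ 2) = 2 := by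
  have : (1 + rf w.1 ^ 2) ≠ 0 := by positivity
  have : (1 + pf w.1 ^ 2) ≠ 0 := by positivity
  unfold kp ta; field_simp; ring
lemma kp_pos {w : ℝ × ℝ} (h : w ∈ Dm) : 0 < kp w := by
  have := h.2.1
  unfold kp; positivity
lemma ta_pos {w : ℝ × ℝ} (h : w ∈ Dm) : 0 < ta w := by
  have : 0 < 1 - w.2 := by linarith [h.2.2]
  unfold ta; positivity

lemma Ph_inj : Set.InjOn Ph Dm := by
  have aux : ∀ v ∈ Dm, ∀ w ∈ Dm, Ph v = Ph w → 
      (1 - pf w.1 ^ 2) * (yv v - yv w) = - kp v * (pf v.1 - pf w.1)^2 - ta v * (rf v.1 - rf w.1)^2 := by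
    intro v hv w hw h
    rw [Ph_eq, Ph_eq, Prod.mk.injEq] at h
    obtain ⟨h1, h2⟩ := h
    rw [yv_eq, yv_eq]
    have e1 := kt v
    have e2 := kt w
    have e3 := pr_sq v.1
    have e4 := pr_sq w.1
    linear_combination e1 - e2 - 2 * rf w.1 * h1 - 2 * pf w.1 * h2 + (ta v - ta w) * e4
  intro v hv w hw h
  have h1 := aux v hv w hw h
  have h2 := aux w hw v hv h.symm
  have a1 : 0 < 1 - pf w.1 ^ 2 := by nlinarith [pf_lt hw.1, pf_pos hw.1]
  have a2 : 0 < 1 - pf v.1 ^ 2 := by nlinarith [pf_lt hv.1, pf_pos hv.1]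
  have k1 := kp_pos hv
  have k2 := kp_pos hw
  have t1 := ta_pos hv
  have t2 := ta_pos hw
  have l1 : yv v ≤ yv w := by
    by_contra! hh
    have : 0 < (1 - pf w.1 ^ 2) * (yv v - yv w) := mul_pos a1 (by linarith)
    have : 0 ≤ kp v * (pf v.1 - pf w.1)^2 := by positivity
    have : 0 ≤ ta v * (rf v.1 - rf w.1)^2 := by positivity
    linarith
  have l2 : yv w ≤ yv v := by
    by_contra! hh
    have : 0 < (1 - pf v.1 ^ 2) * (yv w - yv v) := mul_pos a2 (by linarith)
    have : 0 ≤ kp w * (pf w.1 - pf v.1)^2 := by positivity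
    have : 0 ≤ ta w * (rf w.1 - rf v.1)^2 := by positivity
    linarith
  have l3 : yv v - yv w = 0 := by linarith
  rw [l3] at h1
  have l4 : pf v.1 = pf w.1 := by
    have : 0 ≤ ta v * (rf v.1 - rf w.1)^2 := by positivity
    have h5 : kp v * (pf v.1 - pf w.1)^2 ≤ 0 := by linarith
    by_contra hne
    have : 0 < (pf v.1 - pf w.1)^2 := by
      have := sub_ne_zero.2 hne
      positivity
    nlinarith [mul_pos k1 this]
  have l5 : v.1 = w.1 := by
    unfold pf at l4
    have l6 := mul_left_cancel₀ (by positivity) l4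
    have := pi_pos
    exact injOn_sin ⟨by linarith [hv.1.1], by linarith [hv.1.2]⟩ ⟨by linarith [hw.1.1], by linarith [hw.1.2]⟩ l6
  have l7 : v.2 = w.2 := by
    have h8 : Ph v = Ph w := h
    have := congrArg Prod.snd h8
    simp only [Ph, l5] at this
    refine mul_right_cancel₀ ?_ this
    have := pf_pos hw.1
    unfold bf; positivity
  exact Prod.ext l5 l7

lemma Ph_image : Ph '' Dm = Tr := by
  ext ⟨x, z⟩
  constructor
  · rintro ⟨w, hw, h⟩
    rw [Ph_eq] at h
    simp only [Prod.mk.injEq] at h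
    obtain ⟨rfl, rfl⟩ := h
    have h1 := pf_pos hw.1
    have h2 := pf_lt hw.1
    have h3 := rf_gt hw.1
    have h4 := kp_pos hw
    have h5 := ta_pos hw
    have h6 := kt w
    refine ⟨by positivity, by positivity, ?_⟩
    show rf w.1 * ta w + pf w.1 * kp w < 1
    have : 0 < kp w * (1 - pf w.1)^2 := mul_pos h4 (pow_pos (by linarith) 2)
    have : 0 ≤ ta w * (1 - rf w.1)^2 := by positivity
    nlinarith
  · rintro ⟨hx, hz, hxz⟩
    simp only at hx hz hxz
    have hc : ContinuousOn (fun t => rf t * (2 * pf t - z * (1 + pf t ^ 2)) - x * pf t * (1 + rf t ^ 2)) (Set.Icc 0 (π/4)) := by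
      have := pf_cont
      have := rf_cont
      fun_prop
    have h22 : √2 * (√2 / 2) = 1 := by
      have := Real.mul_self_sqrt (show (0:ℝ) ≤ 2 by norm_num)
      linarith
    have h0 : pf 0 = 0 := by simp [pf]
    have h0' : rf 0 = √2 := by simp [rf]
    have h1 : pf (π/4) = 1 := by rw [pf, sin_pi_div_four, h22]
    have h1' : rf (π/4) = 1 := by rw [rf, cos_pi_div_four, h22]
    have := intermediate_value_Ioo (by positivity) hc
    have hm : (0:ℝ) ∈ Set.Ioo (rf 0 * (2 * pf 0 - z * (1 + pf 0 ^ 2)) - x * pf 0 * (1 + rf 0 ^ 2))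
       (rf (π/4) * (2 * pf (π/4) - z * (1 + pf (π/4) ^ 2)) - x * pf (π/4) * (1 + rf (π/4) ^ 2)) := by
      rw [h0, h0', h1, h1']
      constructor
      · have : 0 < √2 * z := by positivity
        linarith
      · linarith
    obtain ⟨t, ht, h⟩ := this hm
    simp only at h
    have p1 := pf_pos ht
    have r1 := rf_gt ht
    have hpos : 0 < rf t * (2 * pf t - z * (1 + pf t ^ 2)) := by
      have : 0 < x * pf t * (1 + rf t ^ 2) := by positivity
      linarith
    have hpos2 := pos_of_mul_pos_right hpos (by linarith)
    refine ⟨(t, z * (1 + pf t ^ 2) / (2 * pf t)), ⟨ht, by positivity, ?_⟩, ?_⟩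
    · show _ / _ < (1:ℝ)
      rw [div_lt_one (by positivity)]; linarith
    · unfold Ph af bf
      ext
      · simp only
        field_simp
        linarith
      · simp only
        field_simp

abbrev E3 := EuclideanSpace ℝ (Fin 3)
def S1 : Set E3 := {p : EuclideanSpace ℝ (Fin 3) | (p 0) ^ 2 + (p 1 + 1) ^ 2 ≤ 1 ∧ p 2 = 0}
def S2 : Set E3 := {p : EuclideanSpace ℝ (Fin 3) | (p 1 - 1) ^ 2 + (p 2) ^ 2 ≤ 1 ∧ p 0 = 0}
def KK : Set E3 := convexHull ℝ (S1 ∪ S2)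
def sl (w : ℝ × ℝ) : Set ℝ := {y | !₂[w.1, y, w.2] ∈ KK}

lemma KK_lin {a b c d : ℝ} (h1 : ∀ x y : ℝ, x ^ 2 + (y + 1) ^ 2 ≤ 1 → a * x + b * y ≤ d)
    (h2 : ∀ y z : ℝ, (y - 1) ^ 2 + z ^ 2 ≤ 1 → b * y + c * z ≤ d) {x y z : ℝ}
    (h : !₂[x, y, z] ∈ KK) : a * x + b * y + c * z ≤ d := by
  have : KK ⊆ {p : E3 | a * p 0 + b * p 1 + c * p 2 ≤ d} := by
    apply convexHull_min
    · rintro p (⟨h, h'⟩ | ⟨h, h'⟩)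
      · have := h1 _ _ h
        simp only [Set.mem_ofPred_eq, h']; linarith
      · have := h2 _ _ h
        simp only [Set.mem_ofPred_eq, h']; linarith
    · intro u hu v hv s t hs ht hst
      simp only [Set.mem_ofPred_eq] at *
      simp
      have e1 := mul_le_mul_of_nonneg_left hu hs
      have e2 := mul_le_mul_of_nonneg_left hv ht
      have e3 : s * d + t * d = d := by rw [← add_mul, hst, one_mul]
      linarith
  simpa using this h

lemma KK_map (L : E3 →ₗ[ℝ] E3) (hL : ∀ p ∈ S1 ∪ S2, L p ∈ S1 ∪ S2) {p : E3} (h : p ∈ KK) : L p ∈ KK := by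
  have : KK ⊆ L ⁻¹' KK := by
    apply convexHull_min
    · intro p hp
      exact subset_convexHull ℝ _ (hL p hp)
    · exact (convex_convexHull ℝ _).linear_preimage L
  exact this h

noncomputable def La : E3 →ₗ[ℝ] E3 where
  toFun p := !₂[-p 0, p 1, p 2]
  map_add' p q := by ext i; fin_cases i <;> simp; ring
  map_smul' c p := by ext i; fin_cases i <;> simp
noncomputable def Lb : E3 →ₗ[ℝ] E3 where
  toFun p := !₂[p 0, p 1, -p 2]
  map_add' p q := by ext i; fin_cases i <;> simp; ring
  map_smul' c p := by ext i; fin_cases i <;> simp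
noncomputable def Lc : E3 →ₗ[ℝ] E3 where
  toFun p := !₂[p 2, -p 1, p 0]
  map_add' p q := by ext i; fin_cases i <;> simp; ring
  map_smul' c p := by ext i; fin_cases i <;> simp

lemma KK_a {x y z : ℝ} (h : !₂[x, y, z] ∈ KK) : !₂[-x, y, z] ∈ KK := by
  have := KK_map La (by
    rintro p (⟨h, h'⟩ | ⟨h, h'⟩)
    · left; simp [La, S1]; exact ⟨h, h'⟩
    · right; simp [La, S2]; exact ⟨h, h'⟩) h
  simpa [La] using this
lemma KK_b {x y z : ℝ} (h : !₂[x, y, z] ∈ KK) : !₂[x, y, -z] ∈ KK := by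
  have := KK_map Lb (by
    rintro p (⟨h, h'⟩ | ⟨h, h'⟩)
    · left; simp [Lb, S1]; exact ⟨h, h'⟩
    · right; simp [Lb, S2]; exact ⟨h, h'⟩) h
  simpa [Lb] using this
lemma KK_c {x y z : ℝ} (h : !₂[x, y, z] ∈ KK) : !₂[z, -y, x] ∈ KK := by
  have := KK_map Lc (by
    rintro p (⟨h, h'⟩ | ⟨h, h'⟩)
    · right; simp [Lc, S2]; exact ⟨by linarith, h'⟩
    · left; simp [Lc, S1]; exact ⟨by linarith, h'⟩) h
  simpa [Lc] using this

lemma sl_a (x z : ℝ) : sl (-x, z) = sl (x, z) := by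
  ext y; exact ⟨fun h => by have := KK_a h; rwa [neg_neg] at this, fun h => KK_a h⟩
lemma sl_b (x z : ℝ) : sl (x, -z) = sl (x, z) := by
  ext y; exact ⟨fun h => by have := KK_b h; rwa [neg_neg] at this, fun h => KK_b h⟩
lemma sl_c (w : ℝ × ℝ) (y : ℝ) : y ∈ sl w ↔ -y ∈ sl w.swap :=
  ⟨fun h => KK_c h, fun h => by have := KK_c h; rwa [neg_neg] at this⟩

lemma sl_empty {w : ℝ × ℝ} (h : 1 < w.1 + w.2) : sl w = ∅ := by
  rw [Set.eq_empty_iff_forall_notMem]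
  intro y hy
  have := KK_lin (a := 1) (b := 0) (c := 1) (d := 1) (fun x y h => by nlinarith [sq_nonneg (y+1)]) 
    (fun y z h => by nlinarith [sq_nonneg (y-1)]) hy
  linarith

lemma lin_bd {a b c x y : ℝ} (hc : 0 ≤ c) (h : a ^ 2 + b ^ 2 = c ^ 2) (hxy : x ^ 2 + y ^ 2 ≤ 1) : a * x + b * y ≤ c := by
  apply le_of_sq_le_sq _ hc
  nlinarith [sq_nonneg (a * y - b * x), mul_le_mul_of_nonneg_left hxy (sq_nonneg c)]

lemma sl_greatest {w : ℝ × ℝ} (hw : w ∈ Dm) : IsGreatest (sl (Ph w)) (yv w) := by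
  have e := pr_sq w.1
  have hk := kt w
  have p1 := pf_pos hw.1
  have p2 := pf_lt hw.1
  have r1 := rf_gt hw.1
  constructor
  · have m1 : !₂[af w.1, - (2 / (1 + rf w.1 ^ 2)), 0] ∈ KK := by
      apply subset_convexHull
      left
      have : (1 + rf w.1 ^ 2) ≠ 0 := by positivity
      simp [S1, af]
      field_simp
      apply le_of_eq; ring
    have m2 : !₂[0, (2 / (1 + pf w.1 ^ 2)), bf w.1] ∈ KK := by
      apply subset_convexHull
      right
      have : (1 + pf w.1 ^ 2) ≠ 0 := by positivity
      simp [S2, bf]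
      field_simp
      apply le_of_eq; ring
    have := (convex_convexHull ℝ (S1 ∪ S2)) m1 m2 (a := 1 - w.2) (b := w.2) (by linarith [hw.2.2]) hw.2.1.le (by ring)
    show _ ∈ convexHull ℝ (S1 ∪ S2)
    convert! this using 1
    ext i; fin_cases i <;> simp [Ph, yv]; ring
  · intro y hy
    have := KK_lin (a := 2 * rf w.1) (b := 1 - pf w.1 ^ 2) (c := 2 * pf w.1) (d := 2) (fun x y h => by
      have := lin_bd (a := 2 * rf w.1) (b := 1 - pf w.1 ^ 2) (c := 1 + rf w.1 ^ 2) (by positivity) (by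
        have : 1 - pf w.1 ^ 2 = rf w.1 ^ 2 - 1 := by linarith
        rw [this]; ring) h
      nlinarith) (fun y z h => by
      have := lin_bd (a := 1 - pf w.1 ^ 2) (b := 2 * pf w.1) (c := 1 + pf w.1 ^ 2) (by positivity) (by ring) h
      nlinarith) hy
    simp only [Ph_eq] at this
    rw [yv_eq]
    have h0 : 0 < 1 - pf w.1 ^ 2 := by nlinarith
    have : (1 - pf w.1 ^ 2) * y ≤ (1 - pf w.1 ^ 2) * (kp w - ta w) := by
      have h9 : (1 - pf w.1 ^ 2) * ta w = (rf w.1 ^ 2 - 1) * ta w := by congr 1; linarith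
      linarith
    exact le_of_mul_le_mul_left this h0

noncomputable def MM (w : ℝ × ℝ) : ℝ := sSup (sl w)

lemma sl_gr {w : ℝ × ℝ} (hw : w ∈ Tr) : IsGreatest (sl w) (MM w) := by
  rw [← Ph_image] at hw
  obtain ⟨v, hv, rfl⟩ := hw
  have := sl_greatest hv
  rw [MM, this.csSup_eq]; exact this

lemma Tr_swap {w : ℝ × ℝ} (hw : w ∈ Tr) : w.swap ∈ Tr := by
  obtain ⟨h1, h2, h3⟩ := hw
  exact ⟨h2, h1, by simp; linarith⟩

lemma sl_conv (w : ℝ × ℝ) : Convex ℝ (sl w) := by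
  intro y hy y' hy' s t hs ht hst
  have := (convex_convexHull ℝ (S1 ∪ S2)) hy hy' hs ht hst
  show _ ∈ convexHull ℝ (S1 ∪ S2)
  convert! this using 1
  ext i; fin_cases i <;> simp <;> rw [← add_mul, hst, one_mul]

lemma sl_least {w : ℝ × ℝ} (hw : w ∈ Tr) : IsLeast (sl w) (- MM w.swap) := by
  have h := sl_gr (Tr_swap hw)
  refine ⟨?_, fun y hy => ?_⟩
  · rw [sl_c]; simpa using h.1
  · have := h.2 ((sl_c w y).1 hy)
    linarith

lemma sl_eq {w : ℝ × ℝ} (hw : w ∈ Tr) : sl w = Set.Icc (- MM w.swap) (MM w) := by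
  have h1 := sl_gr hw
  have h2 := sl_least hw
  apply subset_antisymm
  · exact fun y hy => ⟨h2.2 hy, h1.2 hy⟩
  · exact (sl_conv w).ordConnected.out h2.1 h1.1

lemma vol_sl {w : ℝ × ℝ} (hw : w ∈ Tr) : volume (sl w) = ENNReal.ofReal (MM w + MM w.swap) := by
  rw [sl_eq hw, Real.volume_Icc]; congr 1; ring

lemma MM_nonneg {w : ℝ × ℝ} (hw : w ∈ Tr) : 0 ≤ MM w + MM w.swap := by
  have := (sl_gr hw).2 (sl_least hw).1
  linarith

lemma Dm_meas : MeasurableSet Dm := measurableSet_Ioo.prod measurableSet_Ioo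
lemma Tr_meas : MeasurableSet Tr := by
  apply IsOpen.measurableSet
  exact ((isOpen_lt continuous_const continuous_fst).inter ((isOpen_lt continuous_const continuous_snd).inter (isOpen_lt (continuous_fst.add continuous_snd) continuous_const)))

lemma MM_int : IntegrableOn MM Tr ∧ ∫ w in Tr, MM w = π / (4 * √3) := by
  have hd : ∀ x ∈ Dm, HasFDerivWithinAt Ph (Ph' x) Dm x := fun x _ => (Ph_deriv x).hasFDerivWithinAt
  have heq : Set.EqOn (fun x => |(Ph' x).det| • MM (Ph x)) (fun w => jac w * yv w) Dm := by
    intro w hw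
    simp only
    rw [Ph'_det, abs_of_nonneg (jac_nonneg hw), MM, (sl_greatest hw).csSup_eq, smul_eq_mul]
  rw [← Ph_image, integrableOn_image_iff_integrableOn_abs_det_fderiv_smul _ Dm_meas hd Ph_inj,
    integral_image_eq_integral_abs_det_fderiv_smul _ Dm_meas hd Ph_inj, integrableOn_congr_fun heq Dm_meas,
    setIntegral_congr_fun Dm_meas heq]
  exact Dm_int

lemma lint_Tr : ∫⁻ w in Tr, volume (sl w) = ENNReal.ofReal (π / (2 * √3)) := by
  have hpre : Prod.swap ⁻¹' Tr = Tr := by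
    ext w; exact ⟨fun h => by simpa using Tr_swap h, fun h => Tr_swap h⟩
  have hmp : MeasurePreserving (Prod.swap : ℝ × ℝ → ℝ × ℝ) volume volume := Measure.measurePreserving_swap
  have hme : MeasurableEmbedding (Prod.swap : ℝ × ℝ → ℝ × ℝ) := MeasurableEquiv.prodComm.measurableEmbedding
  obtain ⟨h1, h2⟩ := MM_int
  have h3 : ∫ w in Tr, MM w.swap = π / (4 * √3) := by
    rw [← h2]
    have := hmp.setIntegral_preimage_emb hme MM Tr
    rwa [hpre] at this
  have h4 : IntegrableOn (fun w : ℝ × ℝ => MM w.swap) Tr := by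
    have := (hmp.integrableOn_comp_preimage hme (f := MM) (s := Tr)).2 h1
    rwa [hpre] at this
  rw [setLIntegral_congr_fun Tr_meas (fun w hw => vol_sl hw), ← ofReal_integral_eq_lintegral_ofReal (f := fun w => MM w + MM w.swap) (h1.add h4), integral_add h1 h4, h2, h3]
  · congr 1; field_simp; norm_num
  · exact (ae_restrict_iff' Tr_meas).2 (Filter.Eventually.of_forall fun w hw => MM_nonneg hw)

lemma lint_even (g : ℝ → ENNReal) (hg : ∀ x, g (-x) = g x) : ∫⁻ x, g x = 2 * ∫⁻ x in Set.Ioi 0, g x := by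
  rw [← lintegral_add_compl g (measurableSet_Ioi (a := (0:ℝ))), Set.compl_Ioi, two_mul]
  congr 1
  have := (Measure.measurePreserving_neg (volume : Measure ℝ)).setLIntegral_comp_preimage_emb (MeasurableEquiv.neg ℝ).measurableEmbedding g (Set.Ioi 0)
  rw [← this]
  simp only [hg]
  rw [← setLIntegral_congr (Iio_ae_eq_Iic (a := (0:ℝ)))]
  congr 2
  simp

noncomputable def psi : ℝ × (ℝ × ℝ) ≃ᵐ E3 :=
  (((MeasurableEquiv.toLp 2 (Fin 3 → ℝ)).symm.trans (MeasurableEquiv.piFinSuccAbove (fun _ => ℝ) 1)).trans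
    ((MeasurableEquiv.refl ℝ).prodCongr MeasurableEquiv.finTwoArrow)).symm

lemma psi_mp : MeasurePreserving psi := by
  apply MeasurePreserving.symm
  refine MeasurePreserving.trans (MeasurePreserving.trans (PiLp.volume_preserving_ofLp (Fin 3)) (volume_preserving_piFinSuccAbove (fun _ => ℝ) 1)) ?_
  exact (MeasurePreserving.id volume).prod (volume_preserving_finTwoArrow ℝ)

lemma psi_apply (y : ℝ) (w : ℝ × ℝ) : psi (y, w) = !₂[w.1, y, w.2] := by
  rw [psi, MeasurableEquiv.symm_apply_eq]
  ext <;> simp [MeasurableEquiv.piFinSuccAbove, MeasurableEquiv.finTwoArrow]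
  · rfl
  · rfl
  · rfl

lemma ball_conv (f g : E3 →ₗ[ℝ] ℝ) (a b : ℝ) :
    Convex ℝ {p : E3 | (f p + a) ^ 2 + (g p + b) ^ 2 ≤ 1} := by
  intro u hu v hv s t hs ht hst
  simp only [Set.mem_ofPred_eq, map_add, map_smul, smul_eq_mul] at *
  have hs' : s = 1 - t := by linarith
  subst hs'
  have e1 := mul_le_mul_of_nonneg_left hu hs
  have e2 := mul_le_mul_of_nonneg_left hv ht
  have e3 := mul_nonneg (mul_nonneg hs ht) (add_nonneg (sq_nonneg (f u - f v)) (sq_nonneg (g u - g v)))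
  nlinarith

noncomputable def cd (i : Fin 3) : E3 →ₗ[ℝ] ℝ where
  toFun p := p i
  map_add' p q := by simp
  map_smul' c p := by simp

lemma cd_apply (i : Fin 3) (p : E3) : cd i p = p i := rfl

lemma S1_conv : Convex ℝ S1 := by
  have h1 := ball_conv (cd 0) (cd 1) 0 1
  have h2 : Convex ℝ {p : E3 | cd 2 p = 0} := convex_hyperplane (cd 2).isLinear 0
  convert! h1.inter h2 using 1
  ext p; simp [S1, cd_apply]
lemma S2_conv : Convex ℝ S2 := by
  have h1 := ball_conv (cd 1) (cd 2) (-1) 0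
  have h2 : Convex ℝ {p : E3 | cd 0 p = 0} := convex_hyperplane (cd 0).isLinear 0
  convert! h1.inter h2 using 1
  ext p; simp [S2, cd_apply, sub_eq_add_neg]

lemma S1_comp : IsCompact S1 := by
  refine Metric.isCompact_of_isClosed_isBounded ?_ ?_
  · exact (isClosed_le (f := fun p : E3 => (p 0) ^ 2 + (p 1 + 1) ^ 2) (g := fun _ => 1) (by fun_prop) (by fun_prop)).inter (isClosed_eq (f := fun p : E3 => p 2) (g := fun _ => 0) (by fun_prop) (by fun_prop))
  · refine (Metric.isBounded_closedBall (x := (0 : E3)) (r := 3)).subset ?_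
    rintro p ⟨h, h'⟩
    rw [mem_closedBall_zero_iff, EuclideanSpace.norm_eq, Real.sqrt_le_iff]
    simp only [Fin.sum_univ_three, norm_eq_abs, sq_abs, h']
    constructor <;> nlinarith [sq_nonneg (p 0), sq_nonneg (p 1 + 1)]
lemma S2_comp : IsCompact S2 := by
  refine Metric.isCompact_of_isClosed_isBounded ?_ ?_
  · exact (isClosed_le (f := fun p : E3 => (p 1 - 1) ^ 2 + (p 2) ^ 2) (g := fun _ => 1) (by fun_prop) (by fun_prop)).inter (isClosed_eq (f := fun p : E3 => p 0) (g := fun _ => 0) (by fun_prop) (by fun_prop))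
  · refine (Metric.isBounded_closedBall (x := (0 : E3)) (r := 3)).subset ?_
    rintro p ⟨h, h'⟩
    rw [mem_closedBall_zero_iff, EuclideanSpace.norm_eq, Real.sqrt_le_iff]
    simp only [Fin.sum_univ_three, norm_eq_abs, sq_abs, h']
    constructor <;> nlinarith [sq_nonneg (p 2), sq_nonneg (p 1 - 1)]

lemma KK_meas : MeasurableSet KK := by
  have h1 : S1.Nonempty := ⟨0, by simp [S1]⟩
  have h2 : S2.Nonempty := ⟨0, by simp [S2]⟩
  have hc : IsCompact ((fun q : ℝ × (E3 × E3) => (1 - q.1) • q.2.1 + q.1 • q.2.2) '' (Set.Icc 0 1 ×ˢ (S1 ×ˢ S2))) :=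
    (isCompact_Icc.prod (S1_comp.prod S2_comp)).image (by fun_prop)
  have : KK = ((fun q : ℝ × (E3 × E3) => (1 - q.1) • q.2.1 + q.1 • q.2.2) '' (Set.Icc 0 1 ×ˢ (S1 ×ˢ S2))) := by
    rw [KK, S1_conv.convexHull_union S2_conv h1 h2]
    ext p
    rw [mem_convexJoin]
    simp only [segment_eq_image, Set.mem_image]
    constructor
    · rintro ⟨a, ha, b, hb, t, ht, rfl⟩
      exact ⟨(t, (a, b)), ⟨ht, ha, hb⟩, rfl⟩
    · rintro ⟨⟨t, a, b⟩, ⟨ht, ha, hb⟩, rfl⟩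
      exact ⟨a, ha, b, hb, t, ht, rfl⟩
  rw [this]
  exact hc.isClosed.measurableSet

lemma line_null : ∀ᵐ w : ℝ × ℝ, w.1 + w.2 ≠ 1 := by
  rw [Measure.volume_eq_prod, ae_iff]
  simp only [ne_eq, not_not]
  rw [Measure.measure_prod_null (by measurability)]
  refine Filter.Eventually.of_forall fun x => ?_
  have : Prod.mk x ⁻¹' {w : ℝ × ℝ | w.1 + w.2 = 1} = {1 - x} := by
    ext z; simp; constructor <;> intro <;> linarith
  show volume (Prod.mk x ⁻¹' {w : ℝ × ℝ | w.1 + w.2 = 1}) = 0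
  rw [this]; simp

lemma volKK : volume KK = ENNReal.ofReal (2 * π / √3) := by
  have hm : MeasurableSet (psi ⁻¹' KK) := psi.measurable KK_meas
  have hsl : ∀ w, (fun y => (y, w)) ⁻¹' (psi ⁻¹' KK) = sl w := by
    intro w; ext y; simp only [Set.mem_preimage, psi_apply]; rfl
  have hF : Measurable fun w => volume (sl w) := by
    have := measurable_measure_prodMk_right (μ := (volume : Measure ℝ)) hm
    simpa only [hsl] using this
  rw [← psi_mp.measure_preimage KK_meas.nullMeasurableSet, Measure.volume_eq_prod, Measure.prod_apply_symm hm]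
  simp only [hsl]
  rw [Measure.volume_eq_prod, lintegral_prod _ hF.aemeasurable]
  have e1 : ∀ x, ∫⁻ z, volume (sl (x, z)) = 2 * ∫⁻ z in Set.Ioi 0, volume (sl (x, z)) := fun x =>
    lint_even _ (fun z => by rw [sl_b])
  simp only [e1]
  rw [lint_even _ (fun x => by simp only [sl_a])]
  have e2 : ∀ x, Measurable fun z => volume (sl (x, z)) := fun x => hF.comp (by fun_prop)
  have e3 : Measurable fun x => ∫⁻ z in Set.Ioi 0, volume (sl (x, z)) := hF.lintegral_prod_right'
  rw [lintegral_const_mul _ e3]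
  rw [← lintegral_prod (μ := volume.restrict (Set.Ioi 0)) (ν := volume.restrict (Set.Ioi 0)) (fun w => volume (sl w)) hF.aemeasurable, Measure.prod_restrict, ← Measure.volume_eq_prod]
  have e4 : ∫⁻ w in Set.Ioi 0 ×ˢ Set.Ioi 0, volume (sl w) = ∫⁻ w in Tr, volume (sl w) := by
    rw [← lintegral_indicator (measurableSet_Ioi.prod measurableSet_Ioi), ← lintegral_indicator Tr_meas]
    apply lintegral_congr_ae
    filter_upwards [line_null] with w hw
    by_cases h : w ∈ Tr
    · have h' : w ∈ Set.Ioi (0:ℝ) ×ˢ Set.Ioi (0:ℝ) := ⟨h.1, h.2.1⟩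
      rw [Set.indicator_of_mem h, Set.indicator_of_mem h']
    · rw [Set.indicator_of_notMem h]
      by_cases h' : w ∈ Set.Ioi (0:ℝ) ×ˢ Set.Ioi (0:ℝ)
      · rw [Set.indicator_of_mem h', sl_empty, measure_empty]
        by_contra! hh
        exact h ⟨h'.1, h'.2, lt_of_le_of_ne hh hw⟩
      · rw [Set.indicator_of_notMem h']
  rw [e4, lint_Tr, ← mul_assoc, show (2:ENNReal) * 2 = ENNReal.ofReal 4 by norm_num, ← ENNReal.ofReal_mul (by norm_num)]
  congr 1
  field_simp; norm_num

/-- The Lebesgue volume of the convex hull in ℝ³ of the union of the two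
unit disks D₁ = {(x,y,0) : x² + (y+1)² ≤ 1} and D₂ = {(0,y,z) : (y−1)² + z² ≤ 1}
equals 2π/√3. -/
theorem volume_convexHull_example_three :
    volume (convexHull ℝ
      ({p : EuclideanSpace ℝ (Fin 3) | (p 0) ^ 2 + (p 1 + 1) ^ 2 ≤ 1 ∧ p 2 = 0} ∪
       {p : EuclideanSpace ℝ (Fin 3) | (p 1 - 1) ^ 2 + (p 2) ^ 2 ≤ 1 ∧ p 0 = 0})) =
    ENNReal.ofReal (2 * Real.pi / Real.sqrt 3) := by
  exact volKK
end

section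
/- Every point of Vinzant's parametrized surface x = u√(−v(2+v)), y = v(1 + 2uv)/(1 + 2v), z = (−1 + u)√(v(2+3v))/(1 + 2v), for 0 ≤ u ≤ 1 and −2 ≤ v ≤ −2/3, satisfies the sextic equation 0 = −4x⁴ + 8x⁶ − 16x²y + 36x⁴y − 16y² + 40x²y² + 15x⁴y² + 36x²y³ + 8y⁴ + 6x²y⁴ − y⁶ − 8x²z² + 24x⁴z² + 16yz² + 40y²z² − 78x²y²z² − 36y³z² + 6y⁴z² − 4z⁴ + 24x²z⁴ − 36yz⁴ + 15y²z⁴ + 8z⁶. -/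
open Real

/-- Clearing denominators in the sextic. -/
theorem sextic_homog (x y z d X A B : ℝ) (hd : d ≠ 0) (hX : x^2 = X)
    (hA : d * y = A) (hB : d^2 * z^2 = B)
    (H : (-4)*d^6*X^2*A^0*B^0 + (8)*d^6*X^3*A^0*B^0 + (-16)*d^5*X^1*A^1*B^0 + (36)*d^5*X^2*A^1*B^0 + (-16)*d^4*X^0*A^2*B^0 + (40)*d^4*X^1*A^2*B^0 + (15)*d^4*X^2*A^2*B^0
      + (36)*d^3*X^1*A^3*B^0 + (8)*d^2*X^0*A^4*B^0 + (6)*d^2*X^1*A^4*B^0 + (-1)*d^0*X^0*A^6*B^0 + (-8)*d^4*X^1*A^0*B^1 + (24)*d^4*X^2*A^0*B^1 + (16)*d^3*X^0*A^1*B^1 + (40)*d^2*X^0*A^2*B^1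
      + (-78)*d^2*X^1*A^2*B^1 + (-36)*d^1*X^0*A^3*B^1 + (6)*d^0*X^0*A^4*B^1 + (-4)*d^2*X^0*A^0*B^2 + (24)*d^2*X^1*A^0*B^2 + (-36)*d^1*X^0*A^1*B^2 + (15)*d^0*X^0*A^2*B^2 + (8)*d^0*X^0*A^0*B^3 = 0) :
    0 = -4*x^4 + 8*x^6 - 16*x^2*y + 36*x^4*y - 16*y^2 + 40*x^2*y^2 + 15*x^4*y^2
      + 36*x^2*y^3 + 8*y^4 + 6*x^2*y^4 - y^6 - 8*x^2*z^2 + 24*x^4*z^2 + 16*y*z^2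
      + 40*y^2*z^2 - 78*x^2*y^2*z^2 - 36*y^3*z^2 + 6*y^4*z^2 - 4*z^4 + 24*x^2*z^4
      - 36*y*z^4 + 15*y^2*z^4 + 8*z^6 := by
  subst hX hA hB
  have h6 : d^6 ≠ 0 := pow_ne_zero 6 hd
  symm
  apply (mul_eq_zero.mp ?_).resolve_left h6
  rw [← H]
  ring

/-- every point of Vinzant's parametrized surface for Example 3 satisfies
the displayed sextic equation. -/
theorem vinzant_parametrization_satisfies_sextic
    (u v : ℝ) (hu0 : 0 ≤ u) (hu1 : u ≤ 1) (hv0 : -2 ≤ v) (hv1 : v ≤ -2/3)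
    (x y z : ℝ)
    (hx : x = u * Real.sqrt (-v * (2 + v)))
    (hy : y = v * (1 + 2 * u * v) / (1 + 2 * v))
    (hz : z = (-1 + u) * Real.sqrt (v * (2 + 3 * v)) / (1 + 2 * v)) :
    0 = -4*x^4 + 8*x^6 - 16*x^2*y + 36*x^4*y - 16*y^2 + 40*x^2*y^2 + 15*x^4*y^2
      + 36*x^2*y^3 + 8*y^4 + 6*x^2*y^4 - y^6 - 8*x^2*z^2 + 24*x^4*z^2 + 16*y*z^2
      + 40*y^2*z^2 - 78*x^2*y^2*z^2 - 36*y^3*z^2 + 6*y^4*z^2 - 4*z^4 + 24*x^2*z^4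
      - 36*y*z^4 + 15*y^2*z^4 + 8*z^6 := by
  have hd : 1 + 2 * v ≠ 0 := by
    intro h
    linarith
  have hX : x ^ 2 = u ^ 2 * (-v * (2 + v)) := by
    rw [hx, mul_pow, Real.sq_sqrt (by nlinarith)]
  have hA : (1 + 2 * v) * y = v * (1 + 2 * u * v) := by
    rw [hy]
    field_simp
  have hB : (1 + 2 * v) ^ 2 * z ^ 2 = (-1 + u) ^ 2 * (v * (2 + 3 * v)) := by
    rw [hz, div_pow, mul_pow, Real.sq_sqrt (by nlinarith)]
    field_simp
  apply sextic_homog x y z _ _ _ _ hd hX hA hB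
  ring
end

section
/- One has ∫_{v=-2}^{-2/3} (−3v) / ( (1 + 2v + 3v²) · √(−(2+v)(2+3v)) ) dv = √2 · π / 2. -/
open Real

lemma aux_q_pos (v : ℝ) : 0 < 1 + 2 * v + 3 * v ^ 2 := by nlinarith [sq_nonneg (3 * v + 1)]

lemma aux_deriv (v : ℝ) (h1 : -2 < v) (h2 : v < -2/3) :
    HasDerivAt (fun v : ℝ => 1 / √2 * Real.arcsin (3 * (1 + v) / √(1 + 2 * v + 3 * v ^ 2)))
      ((-3 * v) / ((1 + 2 * v + 3 * v ^ 2) * Real.sqrt (-((2 + v) * (2 + 3 * v))))) v := by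
  have hq := aux_q_pos v
  have hr : 0 < -((2 + v) * (2 + 3 * v)) := by nlinarith
  have hQ := Real.sqrt_pos.2 hq
  have hR := Real.sqrt_pos.2 hr
  have hQ2 := Real.sq_sqrt hq.le
  have hR2 := Real.sq_sqrt hr.le
  have hs : 0 < √(2:ℝ) := by positivity
  have hs2 : √(2:ℝ) ^ 2 = 2 := Real.sq_sqrt (by norm_num)
  have dq : HasDerivAt (fun v : ℝ => 1 + 2 * v + 3 * v ^ 2) (2 + 6 * v) v := by
    have := (((hasDerivAt_id v).const_mul 2).const_add 1).add (((hasDerivAt_id v).pow 2).const_mul 3)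
    refine this.congr_deriv ?_
    simp; ring
  have dQ := dq.sqrt hq.ne'
  have dn : HasDerivAt (fun v : ℝ => 3 * (1 + v)) 3 v := by
    simpa using ((hasDerivAt_id v).const_add 1).const_mul 3
  have du := dn.div dQ hQ.ne'
  set Q := √(1 + 2 * v + 3 * v ^ 2) with hQd
  set R := √(-((2 + v) * (2 + 3 * v))) with hRd
  have hu : 1 - (3 * (1 + v) / Q) ^ 2 = (√2 * R / Q) ^ 2 := by
    field_simp
    rw [hQ2, hs2, hR2]; ring
  have hpos : 0 < √2 * R / Q := by positivity
  have hlt : 0 < 1 - (3 * (1 + v) / Q) ^ 2 := by rw [hu]; positivity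
  have hne1 : 3 * (1 + v) / Q ≠ -1 := by intro h; rw [h] at hlt; norm_num at hlt
  have hne2 : 3 * (1 + v) / Q ≠ 1 := by intro h; rw [h] at hlt; norm_num at hlt
  have da := ((Real.hasDerivAt_arcsin hne1 hne2).comp v du).const_mul (1 / √2)
  rw [hu, Real.sqrt_sq hpos.le] at da
  refine HasDerivAt.congr_deriv da ?_
  rw [← hQ2]
  field_simp
  rw [hs2, hQ2]; ring

/-- ∫_{v=-2}^{-2/3} (−3v)/((1 + 2v + 3v²)√(−(2+v)(2+3v))) dv = √2 π/2. -/
theorem mean_curvature_integral_example_three :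
    (∫ v in (-2 : ℝ)..(-2/3),
        (-3 * v) / ((1 + 2 * v + 3 * v ^ 2) * Real.sqrt (-((2 + v) * (2 + 3 * v))))) =
      Real.sqrt 2 * Real.pi / 2 := by
  have hc : Continuous
      (fun v : ℝ => 1 / √2 * Real.arcsin (3 * (1 + v) / √(1 + 2 * v + 3 * v ^ 2))) := by
    refine continuous_const.mul (Real.continuous_arcsin.comp (Continuous.div (by fun_prop)
      (by fun_prop) fun v => (Real.sqrt_pos.2 (aux_q_pos v)).ne'))
  have hle : (-2 : ℝ) ≤ -2/3 := by norm_num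
  rw [intervalIntegral.integral_eq_sub_of_hasDerivAt_of_le hle hc.continuousOn
    (fun v hv => aux_deriv v hv.1 hv.2)]
  · have e1 : √(1 + 2 * (-2/3) + 3 * (-2/3) ^ 2 : ℝ) = 1 := by norm_num
    have e2 : √(1 + 2 * (-2) + 3 * (-2) ^ 2 : ℝ) = 3 := by
      rw [show (1 + 2 * (-2) + 3 * (-2) ^ 2 : ℝ) = 3 ^ 2 by norm_num]
      exact Real.sqrt_sq (by norm_num)
    rw [e1, e2, show (3 * (1 + -2/3) / 1 : ℝ) = 1 by norm_num,
      show (3 * (1 + -2) / 3 : ℝ) = -1 by norm_num, Real.arcsin_one, Real.arcsin_neg_one]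
    have hs2 : √(2:ℝ) ^ 2 = 2 := Real.sq_sqrt (by norm_num)
    field_simp
    rw [hs2]; ring
  · refine intervalIntegral.intervalIntegrable_deriv_of_nonneg hc.continuousOn ?_ ?_
    · intro v hv
      rw [min_eq_left hle, max_eq_right hle] at hv
      exact aux_deriv v hv.1 hv.2
    · intro v hv
      rw [min_eq_left hle, max_eq_right hle] at hv
      have := aux_q_pos v
      have h2 := hv.2
      have : 0 ≤ -3 * v := by linarith
      positivity
end

section
/- One has ∫_{v=-2}^{-2/3} (1/√(−v(2+v))) · arccos( 1 / √(1 + 2v + 3v²) ) dv = (π/2) · arccos(1/3). -/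
open Real

open MeasureTheory Set Filter Topology

lemma aux_k (x : ℝ) (hx : 0 < x) (hx1 : x < 1) :
    ∃ r k m : ℝ, r = √(1 + 8 * x ^ 2) ∧ k = √((r + 1) * (r + 5)) ∧ 0 < k ∧ 0 < m ∧ 1 < r ∧
      r ^ 2 = 1 + 8 * x ^ 2 ∧ k ^ 2 = (r + 1) * (r + 5) ∧ m ^ 2 = (r - 1) * (5 - r) := by
  have h1 : (1:ℝ) < √(1 + 8 * x ^ 2) := by
    rw [Real.lt_sqrt (by norm_num)]; nlinarith
  have h3 : √(1 + 8 * x ^ 2) < 3 := by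
    rw [Real.sqrt_lt' (by norm_num)]; nlinarith
  refine ⟨_, _, √((√(1 + 8 * x ^ 2) - 1) * (5 - √(1 + 8 * x ^ 2))), rfl, rfl, ?_, ?_, h1, ?_, ?_, ?_⟩
  · apply Real.sqrt_pos.2; positivity
  · apply Real.sqrt_pos.2; apply mul_pos <;> linarith
  · rw [Real.sq_sqrt (by positivity)]
  · rw [Real.sq_sqrt (by positivity)]
  · rw [Real.sq_sqrt]; apply mul_nonneg <;> linarith

lemma inner_int_s15 (x : ℝ) (hx : 0 < x) (hx1 : x < 1) :
    ∫ w in Ioi (0:ℝ), 8 * w ^ 2 / ((w ^ 2 + 3) ^ 2 + 8 * x ^ 2 * w ^ 2 * (w ^ 2 + 1)) =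
      4 * π / (√(1 + 8 * x ^ 2) * √((√(1 + 8 * x ^ 2) + 1) * (√(1 + 8 * x ^ 2) + 5))) := by
  obtain ⟨r, k, m, hr, hk, k0, m0, r1, hr2, hk2, hm2⟩ := aux_k x hx hx1
  rw [← hr, ← hk]
  have qm : ∀ w : ℝ, 0 < r * w ^ 2 - m * w + 3 := by
    intro w
    have : 4 * r * (r * w ^ 2 - m * w + 3) = (2 * r * w - m) ^ 2 + k ^ 2 := by
      rw [hk2]; linear_combination -hm2
    have h2 : 0 < 4 * r * (r * w ^ 2 - m * w + 3) := by rw [this]; positivity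
    exact (mul_pos_iff_of_pos_left (by positivity)).1 h2
  have qp : ∀ w : ℝ, 0 < r * w ^ 2 + m * w + 3 := by
    intro w
    have := qm (-w)
    ring_nf at this ⊢
    linarith
  have hd : ∀ w : ℝ, HasDerivAt (fun w => 2 / (r * m) * (Real.log (r * w ^ 2 - m * w + 3)
      - Real.log (r * w ^ 2 + m * w + 3)) + 4 / (r * k) * (arctan ((2 * r * w - m) / k)
      + arctan ((2 * r * w + m) / k)))
      (8 * w ^ 2 / ((w ^ 2 + 3) ^ 2 + 8 * x ^ 2 * w ^ 2 * (w ^ 2 + 1))) w := by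
    intro w
    have a1 : HasDerivAt (fun w : ℝ => r * w ^ 2 - m * w + 3) (r * (2 * w) - m) w := by
      have := (((hasDerivAt_pow 2 w).const_mul r).sub ((hasDerivAt_id w).const_mul m)).add_const 3
      exact this.congr_deriv (by simp)
    have a2 : HasDerivAt (fun w : ℝ => r * w ^ 2 + m * w + 3) (r * (2 * w) + m) w := by
      have := (((hasDerivAt_pow 2 w).const_mul r).add ((hasDerivAt_id w).const_mul m)).add_const 3
      exact this.congr_deriv (by simp)
    have a3 : HasDerivAt (fun w : ℝ => (2 * r * w - m) / k) (2 * r / k) w := by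
      have := (((hasDerivAt_id w).const_mul (2 * r)).sub_const m).div_const k
      exact this.congr_deriv (by simp)
    have a4 : HasDerivAt (fun w : ℝ => (2 * r * w + m) / k) (2 * r / k) w := by
      have := (((hasDerivAt_id w).const_mul (2 * r)).add_const m).div_const k
      exact this.congr_deriv (by simp)
    have := (((a1.log (qm w).ne').sub (a2.log (qp w).ne')).const_mul (2 / (r * m))).add
      ((a3.arctan.add a4.arctan).const_mul (4 / (r * k)))
    refine this.congr_deriv ?_
    have e1 : 1 + ((2 * r * w - m) / k) ^ 2 = 4 * r * (r * w ^ 2 - m * w + 3) / k ^ 2 := by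
      field_simp
      rw [hk2]; linear_combination hm2
    have e2 : 1 + ((2 * r * w + m) / k) ^ 2 = 4 * r * (r * w ^ 2 + m * w + 3) / k ^ 2 := by
      field_simp
      rw [hk2]; linear_combination hm2
    have e3 : (w ^ 2 + 3) ^ 2 + 8 * x ^ 2 * w ^ 2 * (w ^ 2 + 1) =
        (r * w ^ 2 - m * w + 3) * (r * w ^ 2 + m * w + 3) := by
      linear_combination (-(w ^ 2 * (w ^ 2 + 1))) * hr2 + w ^ 2 * hm2
    rw [e1, e2, e3]
    have := qm w
    have := qp w
    generalize hA : r * w ^ 2 - m * w + 3 = A at *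
    generalize hB : r * w ^ 2 + m * w + 3 = B at *
    have hr0 : r ≠ 0 := by positivity
    field_simp
    subst hA hB
    ring
  have hlim : Tendsto (fun w => 2 / (r * m) * (Real.log (r * w ^ 2 - m * w + 3)
      - Real.log (r * w ^ 2 + m * w + 3)) + 4 / (r * k) * (arctan ((2 * r * w - m) / k)
      + arctan ((2 * r * w + m) / k))) atTop (𝓝 (2 / (r * m) * 0 + 4 / (r * k) * (π / 2 + π / 2))) := by
    have t1 : Tendsto (fun w : ℝ => (2 * r * w - m) / k) atTop atTop := by
      apply Tendsto.atTop_div_const k0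
      apply tendsto_atTop_add_const_right
      exact Tendsto.const_mul_atTop (by positivity) tendsto_id
    have t2 : Tendsto (fun w : ℝ => (2 * r * w + m) / k) atTop atTop := by
      apply Tendsto.atTop_div_const k0
      apply tendsto_atTop_add_const_right
      exact Tendsto.const_mul_atTop (by positivity) tendsto_id
    have n1 := (tendsto_arctan_atTop.mono_right nhdsWithin_le_nhds).comp t1
    have n2 := (tendsto_arctan_atTop.mono_right nhdsWithin_le_nhds).comp t2
    refine Tendsto.add (Tendsto.const_mul _ ?_) (Tendsto.const_mul _ (n1.add n2))
    have i0 : Tendsto (fun w : ℝ => w⁻¹) atTop (𝓝 0) := tendsto_inv_atTop_zero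
    have c1 : Tendsto (fun w : ℝ => (r - m * w⁻¹ + 3 * w⁻¹ ^ 2) / (r + m * w⁻¹ + 3 * w⁻¹ ^ 2)) atTop
        (𝓝 ((r - m * 0 + 3 * 0 ^ 2) / (r + m * 0 + 3 * 0 ^ 2))) := by
      refine Tendsto.div ?_ ?_ (by simp; positivity)
      · exact (tendsto_const_nhds.sub (i0.const_mul m)).add ((i0.pow 2).const_mul 3)
      · exact (tendsto_const_nhds.add (i0.const_mul m)).add ((i0.pow 2).const_mul 3)
    have hr0 : r ≠ 0 := by positivity
    have c2 : (r - m * 0 + 3 * 0 ^ 2) / (r + m * 0 + 3 * 0 ^ 2) = 1 := by simp [hr0]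
    rw [c2] at c1
    have c3 := c1.log one_ne_zero
    rw [Real.log_one] at c3
    refine c3.congr' ?_
    filter_upwards [eventually_gt_atTop 0] with w hw
    rw [← Real.log_div (qm w).ne' (qp w).ne']
    congr 1
    have s1 : r - m * w⁻¹ + 3 * w⁻¹ ^ 2 = (r * w ^ 2 - m * w + 3) / w ^ 2 := by field_simp
    have s2 : r + m * w⁻¹ + 3 * w⁻¹ ^ 2 = (r * w ^ 2 + m * w + 3) / w ^ 2 := by field_simp
    rw [s1, s2, div_div_div_cancel_right₀ (by positivity)]
  rw [integral_Ioi_of_hasDerivAt_of_nonneg' (fun w _ => hd w) (fun w _ => by positivity) hlim]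
  have z : (2 * r * 0 - m) / k = - ((2 * r * 0 + m) / k) := by ring
  rw [z, arctan_neg]
  simp
  ring

lemma outer_int : ∫ x in (0:ℝ)..1,
      4 * π / (√(1 + 8 * x ^ 2) * √((√(1 + 8 * x ^ 2) + 1) * (√(1 + 8 * x ^ 2) + 5))) =
      π / 2 * arccos (1 / 3) := by
  have key := intervalIntegral.integral_eq_sub_of_hasDerivAt_of_le (a := 0) (b := 1)
    (f := fun x : ℝ => π / 2 * arccos ((7 - √(1 + 8 * x ^ 2)) / (3 * (√(1 + 8 * x ^ 2) + 1))))
    (f' := fun x : ℝ => 4 * π / (√(1 + 8 * x ^ 2) * √((√(1 + 8 * x ^ 2) + 1) * (√(1 + 8 * x ^ 2) + 5))))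
    (by norm_num) ?_ ?_ ?_
  · rw [key]
    have : √(1 + 8 * (1:ℝ) ^ 2) = 3 := by
      rw [show (1 + 8 * (1:ℝ) ^ 2) = 3 ^ 2 by norm_num]; exact Real.sqrt_sq (by norm_num)
    rw [this]
    norm_num
  · apply Continuous.continuousOn
    apply Continuous.mul continuous_const
    apply continuous_arccos.comp
    apply Continuous.div (by fun_prop) (by fun_prop)
    intro x; positivity
  · intro x hx
    obtain ⟨r, k, m, hr, hk, k0, m0, r1, hr2, hk2, hm2⟩ := aux_k x hx.1 hx.2
    have x0 : 0 < x := hx.1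
    rw [← hr, ← hk]
    have hs : √(1 - ((7 - r) / (3 * (r + 1))) ^ 2) = 8 * x * k / (3 * (r + 1) ^ 2) := by
      rw [Real.sqrt_eq_iff_mul_self_eq_of_pos (by positivity)]
      have : r + 1 ≠ 0 := by positivity
      field_simp
      rw [hk2]
      have : x ^ 2 = (r ^ 2 - 1) / 8 := by linarith
      rw [this]; ring
    have hsp : 0 < √(1 - ((7 - r) / (3 * (r + 1))) ^ 2) := by rw [hs]; positivity
    have hsq := Real.sqrt_pos.1 hsp
    have b1 : HasDerivAt (fun x : ℝ => √(1 + 8 * x ^ 2)) (8 * x / r) x := by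
      have := (((hasDerivAt_pow 2 x).const_mul 8).const_add 1).sqrt (by positivity)
      refine this.congr_deriv ?_
      rw [← hr]; field_simp; norm_num
      try ring
    have b2 := ((b1.const_sub 7).div ((b1.add_const 1).const_mul 3)
      (by rw [← hr]; positivity)).congr_deriv (g' := -(8 * (8 * x / r)) / (3 * (r + 1) ^ 2)) (by
        rw [← hr]
        have : r + 1 ≠ 0 := by positivity
        field_simp; ring)
    have b3 : HasDerivAt arccos (-(1 / √(1 - ((7 - r) / (3 * (r + 1))) ^ 2))) 
        ((7 - √(1 + 8 * x ^ 2)) / (3 * (√(1 + 8 * x ^ 2) + 1))) := by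
      rw [← hr]
      apply hasDerivAt_arccos
      · intro h; rw [h] at hsq; norm_num at hsq
      · intro h; rw [h] at hsq; norm_num at hsq
    have b4 := (b3.comp x b2).const_mul (π / 2)
    refine b4.congr_deriv ?_
    rw [hs]
    have : r + 1 ≠ 0 := by positivity
    field_simp
    try norm_num
  · apply Continuous.intervalIntegrable
    apply Continuous.div (by fun_prop) (by fun_prop)
    intro x; positivity

lemma arctan_int (h : ℝ) : arctan h = ∫ x in (0:ℝ)..1, h / (1 + x ^ 2 * h ^ 2) := by
  have key := intervalIntegral.integral_eq_sub_of_hasDerivAt (a := 0) (b := 1)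
    (f := fun x : ℝ => arctan (x * h)) (f' := fun x => h / (1 + x ^ 2 * h ^ 2)) ?_ ?_
  · rw [key]; simp
  · intro x _
    refine ((hasDerivAt_id x).mul_const h).arctan.congr_deriv ?_
    simp; ring
  · apply Continuous.intervalIntegrable
    apply Continuous.div (by fun_prop) (by fun_prop)
    intro x; positivity

lemma swap_int :
    ∫ w in Ioi (0:ℝ), (∫ x in Ioc (0:ℝ) 1, 8 * w ^ 2 / ((w ^ 2 + 3) ^ 2 + 8 * x ^ 2 * w ^ 2 * (w ^ 2 + 1)))
    = ∫ x in Ioc (0:ℝ) 1, (∫ w in Ioi (0:ℝ), 8 * w ^ 2 / ((w ^ 2 + 3) ^ 2 + 8 * x ^ 2 * w ^ 2 * (w ^ 2 + 1))) := by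
  apply integral_integral_swap
  have h1 : Integrable (fun w : ℝ => 8 * (1 + w ^ 2)⁻¹) (volume.restrict (Ioi 0)) :=
    (integrable_inv_one_add_sq.const_mul 8).restrict
  refine (h1.comp_fst (volume.restrict (Ioc (0:ℝ) 1))).mono' ?_ ?_
  · apply Continuous.aestronglyMeasurable
    simp only [Function.uncurry_def]
    apply Continuous.div (by fun_prop) (by fun_prop)
    intro x; positivity
  · refine Eventually.of_forall ?_
    rintro ⟨w, x⟩
    simp only [Function.uncurry_apply_pair]
    rw [Real.norm_of_nonneg (by positivity), ← div_eq_mul_inv, div_le_div_iff₀ (by positivity) (by positivity)]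
    have : 0 ≤ x ^ 2 * w ^ 2 * (w ^ 2 + 1) := by positivity
    nlinarith [sq_nonneg w]

lemma subst_img : (fun w : ℝ => -2 + 4 / (w ^ 2 + 3)) '' Ioi 0 = Ioo (-2) (-2 / 3) := by
  ext v
  simp only [mem_image, mem_Ioi, mem_Ioo]
  constructor
  · rintro ⟨w, hw, rfl⟩
    have : 0 < 4 / (w ^ 2 + 3) := by positivity
    refine ⟨by linarith, ?_⟩
    have : 4 / (w ^ 2 + 3) < 4 / 3 := by
      rw [div_lt_div_iff₀ (by positivity) (by norm_num)]
      nlinarith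
    linarith
  · rintro ⟨h1, h2⟩
    have h3 : 0 < 4 / (v + 2) - 3 := by
      rw [sub_pos, lt_div_iff₀ (by linarith)]; linarith
    refine ⟨√(4 / (v + 2) - 3), Real.sqrt_pos.2 h3, ?_⟩
    rw [Real.sq_sqrt h3.le]
    have : v + 2 ≠ 0 := by linarith
    field_simp
    ring

/-- ∫_{v=-2}^{-2/3} (1/√(−v(2+v))) · arccos(1/√(1 + 2v + 3v²)) dv
      = (π/2)·arccos(1/3). -/
theorem dihedral_angle_integral_example_three :
    (∫ v in (-2 : ℝ)..(-2/3),
        (1 / Real.sqrt (-v * (2 + v)))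
          * Real.arccos (1 / Real.sqrt (1 + 2 * v + 3 * v ^ 2))) =
      (Real.pi / 2) * Real.arccos (1 / 3) := by
  rw [intervalIntegral.integral_of_le (by norm_num), integral_Ioc_eq_integral_Ioo, ← subst_img]
  rw [integral_image_eq_integral_abs_deriv_smul (f' := fun w : ℝ => -(8 * w) / (w ^ 2 + 3) ^ 2)
    measurableSet_Ioi]
  rotate_left
  · intro w hw
    have := ((((hasDerivAt_pow 2 w).add_const 3).fun_inv (by positivity)).const_mul 4).const_add (-2)
    apply HasDerivAt.hasDerivWithinAt
    simp only [div_eq_mul_inv]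
    refine this.congr_deriv ?_
    simp; field_simp; ring
  · intro a ha b hb hab
    simp only [mem_Ioi] at ha hb
    have h : 4 / (a ^ 2 + 3) = 4 / (b ^ 2 + 3) := by simpa using hab
    rw [div_eq_div_iff (by positivity) (by positivity)] at h
    have : a ^ 2 = b ^ 2 := by linarith
    exact (pow_left_inj₀ ha.le hb.le two_ne_zero).1 this
  rw [← outer_int, intervalIntegral.integral_of_le zero_le_one, integral_Ioc_eq_integral_Ioo,
    ← setIntegral_congr_fun measurableSet_Ioo (fun x hx => inner_int_s15 x hx.1 hx.2),
    ← integral_Ioc_eq_integral_Ioo, ← swap_int]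
  apply setIntegral_congr_fun measurableSet_Ioi
  intro w hw
  have hw : 0 < w := hw
  have p8 : (√8 : ℝ) ^ 2 = 8 := Real.sq_sqrt (by norm_num)
  have pw : √(w ^ 2 + 1) ^ 2 = w ^ 2 + 1 := Real.sq_sqrt (by positivity)
  have p80 : (0:ℝ) < √8 := by positivity
  have pw0 : 0 < √(w ^ 2 + 1) := by positivity
  simp only [smul_eq_mul]
  generalize √8 = e at *
  generalize √(w ^ 2 + 1) = s at *
  have hh : 0 ≤ e * w * s / (w ^ 2 + 3) := by positivity
  have hsq : (e * w * s / (w ^ 2 + 3)) ^ 2 = 8 * w ^ 2 * (w ^ 2 + 1) / (w ^ 2 + 3) ^ 2 := by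
    rw [div_pow, mul_pow, mul_pow, p8, pw]
  have g1 : √(-(-2 + 4 / (w ^ 2 + 3)) * (2 + (-2 + 4 / (w ^ 2 + 3)))) = e * s / (w ^ 2 + 3) := by
    rw [Real.sqrt_eq_iff_mul_self_eq_of_pos (by positivity), ← pow_two, div_pow, mul_pow, p8, pw]
    field_simp
    ring
  have g2 : 1 + 2 * (-2 + 4 / (w ^ 2 + 3)) + 3 * (-2 + 4 / (w ^ 2 + 3)) ^ 2
      = 1 + (e * w * s / (w ^ 2 + 3)) ^ 2 := by
    rw [hsq]; field_simp; ring
  have g3 : |-(8 * w) / (w ^ 2 + 3) ^ 2| = 8 * w / (w ^ 2 + 3) ^ 2 := by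
    rw [neg_div, abs_neg, abs_of_nonneg (by positivity)]
  rw [g1, g2, g3, one_div (√(1 + _)), ← arctan_eq_arccos hh, arctan_int,
    intervalIntegral.integral_of_le zero_le_one, ← mul_assoc, ← integral_const_mul]
  congr 1
  ext x
  rw [hsq]
  field_simp
end
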